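/- Let N = 4n + m with n ≥ 1 an integer and m ∈ {0,1,2,3}, and let 0 < s < 1 (so that 2s < N). Then there exist at least n functions u_1, …, u_n ∈ Ḣ^s(ℝ^N), pairwise distinct (u_i and u_j do not agree almost everywhere for i ≠ j), such that each u_j is: (i) a weak solution of the fractional critical Schrödinger equation (−Δ)^s u = |u|^{2*_s−2}u on ℝ^N, i.e. ⟨E'(u_j), v⟩ = 0 for every v ∈ Ḣ^s(ℝ^N) (with Ω = ℝ^N in the pairing); (ii) sign-changing, i.e. both {x : u_j(x) > 0} and {x : u_j(x) < 0} have positive Lebesgue measure; and (iii) non-radial, i.e. there is no function f : [0,∞) → ℝ with u_j(x) = f(|x|) for almost every x ∈ ℝ^N. -/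

import Mathlib

open MeasureTheory Real

noncomputable section

abbrev Euc (N : ℕ) := EuclideanSpace ℝ (Fin N)

/-- The critical exponent `2*_s = 2N/(N-2s)`. -/
def twoStar (N : ℕ) (s : ℝ) : ℝ := 2 * N / (N - 2 * s)

/-- Square of the Gagliardo seminorm `‖u‖²`. -/
def gagSq (N : ℕ) (s : ℝ) (u : Euc N → ℝ) : ℝ :=
  ∫ p : Euc N × Euc N, (u p.1 - u p.2) ^ 2 / dist p.1 p.2 ^ ((N : ℝ) + 2 * s)

/-- The Gagliardo seminorm `‖u‖`. -/
def gagNorm (N : ℕ) (s : ℝ) (u : Euc N → ℝ) : ℝ := Real.sqrt (gagSq N s u)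

/-- Finiteness of the Gagliardo seminorm (`‖u‖ < ∞`). -/
def GagFinite (N : ℕ) (s : ℝ) (u : Euc N → ℝ) : Prop :=
  Integrable (fun p : Euc N × Euc N => (u p.1 - u p.2) ^ 2 / dist p.1 p.2 ^ ((N : ℝ) + 2 * s))

/-- Membership in `Ḣ^s(Ω)`: measurable, in `L^{2*_s}(ℝ^N)`, finite Gagliardo seminorm,
and vanishing a.e. outside `Ω`. -/
structure MemHs (N : ℕ) (s : ℝ) (Ω : Set (Euc N)) (u : Euc N → ℝ) : Prop where
  meas : Measurable u
  lp : Integrable fun x : Euc N => |u x| ^ twoStar N s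
  fin : GagFinite N s u
  vanish : ∀ᵐ x : Euc N, x ∉ Ω → u x = 0

/-- The energy functional `E(u;Ω)`. -/
def energy (N : ℕ) (s : ℝ) (Ω : Set (Euc N)) (u : Euc N → ℝ) : ℝ :=
  (1 / 2) * gagSq N s u - (1 / twoStar N s) * ∫ x in Ω, |u x| ^ twoStar N s

/-- The Nehari functional `N(u;Ω)`. -/
def nehariFun (N : ℕ) (s : ℝ) (Ω : Set (Euc N)) (u : Euc N → ℝ) : ℝ :=
  gagSq N s u - ∫ x in Ω, |u x| ^ twoStar N s

/-- The pairing `⟨E'(u), v⟩` (with domain `Ω`). -/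
def pairing (N : ℕ) (s : ℝ) (Ω : Set (Euc N)) (u v : Euc N → ℝ) : ℝ :=
  (∫ p : Euc N × Euc N, (u p.1 - u p.2) * (v p.1 - v p.2) / dist p.1 p.2 ^ ((N : ℝ) + 2 * s))
    - ∫ x in Ω, |u x| ^ (twoStar N s - 2) * u x * v x

/-- The sharp fractional Sobolev constant `S(N,s)`. -/
def sobolevS (N : ℕ) (s : ℝ) : ℝ :=
  (2 : ℝ) ^ (-(2 * s)) * Real.pi ^ (-s) *
    (Real.Gamma ((N - 2 * s) / 2) / Real.Gamma ((N + 2 * s) / 2)) *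
    (Real.Gamma N / Real.Gamma (N / 2)) ^ (2 * s / N)

/-!
Split `ℝ^N` as `(ℂ × ℂ)^n × ℝ^m`. The scalar multiplications of `(ℂ × ℂ)^n` by unit complex numbers
and the exchange of the two coordinates of a block `ℂ × ℂ` act on `ℝ^N` by isometries. A nonzero
solution which is odd under one of the exchanges changes sign and cannot be radial. Requiring that
it be invariant under the circle, odd under the exchanges in the first `j` blocks and even under
the others gives `n` classes, any two of which meet only in `0`. It remains to find a nonzero
solution in each class.

Within such a class we maximize `∫ |u|^{2*_s}` on the sphere `‖u‖ = 1`, where compactness fails only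
through translations and dilations. By the improved Sobolev inequality every function of a
maximizing sequence is large, in a scale invariant sense, on some ball. The circle orbit of a point
contains many points whose balls are disjoint unless the point is close to the fixed space `ℝ^m`;
hence the ball can be brought to the origin by dilations centred on `ℝ^m`, which preserve the class,
and the rescaled sequence has a nonzero weak limit. The Euler–Lagrange equation passes to this
limit. So the limit is, up to a factor, a solution when tested against the functions of the class,
and by symmetric criticality it is a solution.
-/

namespace FracSobolev

open Filter Topology

/-- The range `0 < s`, `2s < N` of orders for which the critical exponent `2*_s` is finite. -/
class Subcritical (N : ℕ) (s : ℝ) : Prop where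
  pos : 0 < s
  lt : 2 * s < N

section Exponents

variable (N : ℕ) (s : ℝ) [Subcritical N s]

lemma sub_two_mul_pos : 0 < (N : ℝ) - 2 * s := sub_pos.2 Subcritical.lt

lemma add_two_mul_pos : 0 < (N : ℝ) + 2 * s := by
  linarith [Subcritical.pos N (s := s), sub_two_mul_pos N s]

lemma two_lt_twoStar : 2 < twoStar N s := by
  rw [twoStar, lt_div_iff₀ (sub_two_mul_pos N s)]
  linarith [Subcritical.pos N (s := s)]

lemma twoStar_pos : 0 < twoStar N s := two_pos.trans (two_lt_twoStar N s)

end Exponents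

lemma dim_pos (N : ℕ) (s : ℝ) [Subcritical N s] : 0 < N := by
  have : (0 : ℝ) < N := by linarith [Subcritical.pos N (s := s), sub_two_mul_pos N s]
  exact_mod_cast this

/-- The exponent `(N - 2s)/2` by which functions of `Ḣ^s(ℝ^N)` scale under dilations. -/
def scaleExp (N : ℕ) (s : ℝ) : ℝ := (N - 2 * s) / 2

lemma scaleExp_pos (N : ℕ) (s : ℝ) [Subcritical N s] : 0 < scaleExp N s :=
  half_pos (sub_two_mul_pos N s)

lemma scaleExp_mul_twoStar (N : ℕ) (s : ℝ) [Subcritical N s] :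
    scaleExp N s * twoStar N s = N := by
  have := sub_two_mul_pos N s
  rw [scaleExp, twoStar]
  field_simp

/-- Membership in `Ḣ^s(ℝ^N)`. -/
abbrev Hs (N : ℕ) (s : ℝ) (u : Euc N → ℝ) : Prop := MemHs N s Set.univ u

/-- The critical Lebesgue integral `∫ |u|^{2*_s}`. -/
def critInt (N : ℕ) (s : ℝ) (u : Euc N → ℝ) : ℝ := ∫ x, |u x| ^ twoStar N s

/-- The bilinear form whose quadratic form is the squared Gagliardo seminorm. -/
def gagInner (N : ℕ) (s : ℝ) (u v : Euc N → ℝ) : ℝ :=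
  ∫ p : Euc N × Euc N, (u p.1 - u p.2) * (v p.1 - v p.2) / dist p.1 p.2 ^ ((N : ℝ) + 2 * s)

/-- The derivative at `u`, in the direction `v`, of `critInt / 2*_s`. -/
def critPair (N : ℕ) (s : ℝ) (u v : Euc N → ℝ) : ℝ :=
  ∫ x, |u x| ^ (twoStar N s - 2) * u x * v x

/-- The difference quotient `(u(x) - u(y)) / |x - y|^{N/2 + s}`, whose square is the Gagliardo
integrand. The map `u ↦ diffQuot u` embeds `Ḣ^s(ℝ^N)` isometrically into `L²(ℝ^N × ℝ^N)`. -/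
def diffQuot (N : ℕ) (s : ℝ) (u : Euc N → ℝ) (p : Euc N × Euc N) : ℝ :=
  (u p.1 - u p.2) * dist p.1 p.2 ^ (-(((N : ℝ) + 2 * s) / 2))

variable {N : ℕ} {s : ℝ} {u v w : Euc N → ℝ}

lemma pairing_univ_eq (u v : Euc N → ℝ) :
    pairing N s Set.univ u v = gagInner N s u v - critPair N s u v := by
  simp only [pairing, gagInner, critPair, Measure.restrict_univ]

/-! ### The Gagliardo form -/

lemma diffQuot_mul_diffQuot (u v : Euc N → ℝ) (p : Euc N × Euc N) :
    diffQuot N s u p * diffQuot N s v p =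
      (u p.1 - u p.2) * (v p.1 - v p.2) / dist p.1 p.2 ^ ((N : ℝ) + 2 * s) := by
  rcases eq_or_ne p.1 p.2 with hp | hp
  · simp [diffQuot, hp]
  · have hd : 0 < dist p.1 p.2 := dist_pos.2 hp
    have : (dist p.1 p.2 ^ ((N : ℝ) + 2 * s))⁻¹ =
        dist p.1 p.2 ^ (-(((N : ℝ) + 2 * s) / 2)) * dist p.1 p.2 ^ (-(((N : ℝ) + 2 * s) / 2)) := by
      rw [← rpow_add hd, ← rpow_neg hd.le]
      ring_nf
    rw [div_eq_mul_inv, this, diffQuot, diffQuot]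
    ring

lemma diffQuot_sq (u : Euc N → ℝ) (p : Euc N × Euc N) :
    diffQuot N s u p ^ 2 = (u p.1 - u p.2) ^ 2 / dist p.1 p.2 ^ ((N : ℝ) + 2 * s) := by
  rw [sq, diffQuot_mul_diffQuot, sq]

lemma diffQuot_add (u v : Euc N → ℝ) :
    diffQuot N s (u + v) = diffQuot N s u + diffQuot N s v := by
  ext p
  simp only [diffQuot, Pi.add_apply]
  ring

lemma diffQuot_smul (c : ℝ) (u : Euc N → ℝ) :
    diffQuot N s (c • u) = c • diffQuot N s u := by
  ext p
  simp only [diffQuot, Pi.smul_apply, smul_eq_mul]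
  ring

lemma diffQuot_congr (huv : u =ᵐ[volume] v) :
    diffQuot N s u =ᵐ[volume] diffQuot N s v := by
  have h_fst : ∀ᵐ p : Euc N × Euc N, u p.1 = v p.1 := Measure.quasiMeasurePreserving_fst.ae huv
  have h_snd : ∀ᵐ p : Euc N × Euc N, u p.2 = v p.2 := Measure.quasiMeasurePreserving_snd.ae huv
  filter_upwards [h_fst, h_snd] with p hp₁ hp₂
  simp only [diffQuot, hp₁, hp₂]

lemma measurable_diffQuot (hu : Measurable u) : Measurable (diffQuot N s u) := by
  unfold diffQuot
  fun_prop

lemma gagInner_eq (u v : Euc N → ℝ) :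
    gagInner N s u v = ∫ p, diffQuot N s u p * diffQuot N s v p := by
  simp only [diffQuot_mul_diffQuot, gagInner]

lemma gagSq_eq (u : Euc N → ℝ) : gagSq N s u = ∫ p, diffQuot N s u p ^ 2 := by
  simp only [diffQuot_sq, gagSq]

lemma gagSq_nonneg (u : Euc N → ℝ) : 0 ≤ gagSq N s u := by
  rw [gagSq_eq]
  exact integral_nonneg fun _ => sq_nonneg _

lemma gagInner_self (u : Euc N → ℝ) : gagInner N s u u = gagSq N s u := by
  simp only [gagInner_eq, gagSq_eq, sq]

lemma gagInner_comm (u v : Euc N → ℝ) : gagInner N s u v = gagInner N s v u := by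
  simp only [gagInner_eq, mul_comm]

lemma gagInner_congr {u' v' : Euc N → ℝ} (hu : u =ᵐ[volume] u') (hv : v =ᵐ[volume] v') :
    gagInner N s u v = gagInner N s u' v' := by
  rw [gagInner_eq, gagInner_eq]
  refine integral_congr_ae ?_
  filter_upwards [diffQuot_congr hu, diffQuot_congr hv] with p hp₁ hp₂
  rw [hp₁, hp₂]

lemma gagInner_smul_left (c : ℝ) (u w : Euc N → ℝ) :
    gagInner N s (c • u) w = c * gagInner N s u w := by
  simp only [gagInner_eq, diffQuot_smul, Pi.smul_apply, smul_eq_mul, mul_assoc]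
  exact integral_const_mul _ _

lemma gagInner_smul_right (c : ℝ) (u w : Euc N → ℝ) :
    gagInner N s u (c • w) = c * gagInner N s u w := by
  rw [gagInner_comm, gagInner_smul_left, gagInner_comm]

lemma gagSq_smul (c : ℝ) (u : Euc N → ℝ) : gagSq N s (c • u) = c ^ 2 * gagSq N s u := by
  rw [← gagInner_self, gagInner_smul_left, gagInner_smul_right, gagInner_self]
  ring

lemma critInt_nonneg (u : Euc N → ℝ) : 0 ≤ critInt N s u :=
  integral_nonneg fun _ => by positivity

lemma critInt_congr (hu : u =ᵐ[volume] v) : critInt N s u = critInt N s v :=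
  integral_congr_ae <| by
    filter_upwards [hu] with x hx
    rw [hx]

lemma critInt_smul (c : ℝ) (u : Euc N → ℝ) :
    critInt N s (c • u) = |c| ^ twoStar N s * critInt N s u := by
  simp only [critInt, Pi.smul_apply, smul_eq_mul, abs_mul,
    mul_rpow (abs_nonneg _) (abs_nonneg _)]
  exact integral_const_mul _ _

/-! ### The space `Ḣ^s(ℝ^N)` -/

lemma gagFinite_iff (hu : Measurable u) : GagFinite N s u ↔ MemLp (diffQuot N s u) 2 := by
  rw [memLp_two_iff_integrable_sq (measurable_diffQuot hu).aestronglyMeasurable]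
  simp only [diffQuot_sq, GagFinite]

lemma integrable_abs_rpow_iff {X : Type*} [MeasurableSpace X] {μ : Measure X} {f : X → ℝ} {p : ℝ}
    (hf : AEStronglyMeasurable f μ) (hp : 0 < p) :
    Integrable (fun x => |f x| ^ p) μ ↔ MemLp f (ENNReal.ofReal p) μ := by
  rw [← integrable_norm_rpow_iff hf (by simpa using hp) ENNReal.ofReal_ne_top,
    ENNReal.toReal_ofReal hp.le]
  rfl

lemma hs_iff [Subcritical N s] :
    Hs N s u ↔ Measurable u ∧ MemLp u (ENNReal.ofReal (twoStar N s)) ∧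
      MemLp (diffQuot N s u) 2 := by
  refine ⟨fun hu => ⟨hu.meas, ?_, (gagFinite_iff hu.meas).1 hu.fin⟩,
    fun ⟨hu, hLp, hdq⟩ => ⟨hu, ?_, (gagFinite_iff hu).2 hdq, by simp⟩⟩
  · exact (integrable_abs_rpow_iff hu.meas.aestronglyMeasurable (twoStar_pos N s)).1 hu.lp
  · exact (integrable_abs_rpow_iff hu.aestronglyMeasurable (twoStar_pos N s)).2 hLp

lemma _root_.MemHs.memLp [Subcritical N s] (hu : Hs N s u) :
    MemLp u (ENNReal.ofReal (twoStar N s)) := (hs_iff.1 hu).2.1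

lemma _root_.MemHs.memLp_diffQuot (hu : Hs N s u) : MemLp (diffQuot N s u) 2 :=
  (gagFinite_iff hu.meas).1 hu.fin

lemma _root_.MemHs.integrable_diffQuot_sq (hu : Hs N s u) :
    Integrable fun p => diffQuot N s u p ^ 2 := hu.memLp_diffQuot.integrable_sq

lemma hs_zero [Subcritical N s] : Hs N s 0 := by
  refine hs_iff.2 ⟨measurable_const, MemLp.zero, ?_⟩
  have : diffQuot N s 0 = 0 := by ext p; simp [diffQuot]
  exact this ▸ MemLp.zero

lemma _root_.MemHs.add [Subcritical N s] (hu : Hs N s u) (hv : Hs N s v) : Hs N s (u + v) := by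
  rw [hs_iff] at *
  refine ⟨hu.1.add hv.1, hu.2.1.add hv.2.1, ?_⟩
  rw [diffQuot_add]
  exact hu.2.2.add hv.2.2

lemma _root_.MemHs.smul [Subcritical N s] (hu : Hs N s u) (c : ℝ) : Hs N s (c • u) := by
  rw [hs_iff] at *
  refine ⟨hu.1.const_smul c, hu.2.1.const_smul c, ?_⟩
  rw [diffQuot_smul]
  exact hu.2.2.const_smul c

lemma _root_.MemHs.sub [Subcritical N s] (hu : Hs N s u) (hv : Hs N s v) : Hs N s (u - v) := by
  simpa only [neg_one_smul, ← sub_eq_add_neg] using hu.add (hv.smul (-1))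

lemma integrable_diffQuot_mul (hu : Hs N s u) (hv : Hs N s v) :
    Integrable fun p => diffQuot N s u p * diffQuot N s v p :=
  hu.memLp_diffQuot.integrable_mul hv.memLp_diffQuot

lemma gagInner_add_left (hu : Hs N s u) (hv : Hs N s v) (hw : Hs N s w) :
    gagInner N s (u + v) w = gagInner N s u w + gagInner N s v w := by
  simp only [gagInner_eq, diffQuot_add, Pi.add_apply, add_mul]
  exact integral_add (integrable_diffQuot_mul hu hw) (integrable_diffQuot_mul hv hw)

lemma gagInner_sub_left [Subcritical N s] (hu : Hs N s u) (hv : Hs N s v) (hw : Hs N s w) :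
    gagInner N s (u - v) w = gagInner N s u w - gagInner N s v w := by
  rw [sub_eq_add_neg, ← neg_one_smul ℝ v, gagInner_add_left hu (hv.smul _) hw, gagInner_smul_left]
  ring

lemma gagSq_add [Subcritical N s] (hu : Hs N s u) (hv : Hs N s v) :
    gagSq N s (u + v) = gagSq N s u + 2 * gagInner N s u v + gagSq N s v := by
  have huv := hu.add hv
  rw [← gagInner_self, gagInner_add_left hu hv huv, gagInner_comm u, gagInner_comm v,
    gagInner_add_left hu hv hu, gagInner_add_left hu hv hv, gagInner_comm v u, gagInner_self,
    gagInner_self]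
  ring

lemma gagSq_sub_le [Subcritical N s] (hu : Hs N s u) (hv : Hs N s v) :
    gagSq N s (u - v) ≤ 2 * gagSq N s u + 2 * gagSq N s v := by
  have h_add := gagSq_add hu hv
  have h_sub := gagSq_add hu (hv.smul (-1))
  rw [neg_one_smul, ← sub_eq_add_neg, ← neg_one_smul ℝ v, gagInner_smul_right, gagSq_smul] at h_sub
  linarith [gagSq_nonneg (s := s) (u + v)]

/-! ### Mean values and the Sobolev inequality -/

/-- The volume of the unit ball. -/
def ballVol (N : ℕ) : ℝ := volume.real (Metric.ball (0 : Euc N) 1)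

lemma ballVol_pos : 0 < ballVol N :=
  ENNReal.toReal_pos (Metric.measure_ball_pos _ _ one_pos).ne' measure_ball_lt_top.ne

lemma volume_real_ball (x : Euc N) {r : ℝ} (hr : 0 < r) :
    volume.real (Metric.ball x r) = r ^ N * ballVol N := by
  rw [measureReal_def, Measure.addHaar_ball_of_pos _ _ hr, ENNReal.toReal_mul,
    ENNReal.toReal_ofReal (by positivity), finrank_euclideanSpace_fin]
  rfl

/-- The mean value of `u` on the ball of centre `x` and radius `r`. -/
def ballAvg (u : Euc N → ℝ) (x : Euc N) (r : ℝ) : ℝ := ⨍ y in Metric.ball x r, u y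

/-- The mean value of `|u|` normalised so that it is invariant under the dilations which preserve
the norm of `Ḣ^s(ℝ^N)`. -/
def scaledAvg (s : ℝ) (u : Euc N → ℝ) (x : Euc N) (r : ℝ) : ℝ :=
  r ^ scaleExp N s * |ballAvg u x r|

lemma abs_setAverage_rpow_le {X : Type*} [MeasurableSpace X] {μ : Measure X} {t : Set X}
    {f : X → ℝ} {q : ℝ} (ht₀ : μ t ≠ 0) (ht : μ t ≠ ⊤) (hq : 1 ≤ q) (hf : IntegrableOn f t μ)
    (hfq : IntegrableOn (fun x => |f x| ^ q) t μ) :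
    |⨍ x in t, f x ∂μ| ^ q ≤ ⨍ x in t, |f x| ^ q ∂μ := by
  have h_abs : |⨍ x in t, f x ∂μ| ≤ ⨍ x in t, |f x| ∂μ := by
    rw [setAverage_eq, setAverage_eq, smul_eq_mul, smul_eq_mul, abs_mul,
      abs_of_nonneg (by positivity)]
    gcongr
    exact abs_integral_le_integral_abs
  have h_cont : ContinuousOn (fun y : ℝ => y ^ q) (Set.Ici 0) :=
    continuousOn_id.rpow_const fun _ _ => .inr (by linarith)
  calc |⨍ x in t, f x ∂μ| ^ q ≤ (⨍ x in t, |f x| ∂μ) ^ q := by gcongr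
    _ ≤ ⨍ x in t, |f x| ^ q ∂μ := (convexOn_rpow hq).map_set_average_le h_cont isClosed_Ici ht₀ ht
        (ae_of_all _ fun x => abs_nonneg (f x)) hf.abs hfq

lemma sq_sub_setAverage_le {X : Type*} [MeasurableSpace X] {μ : Measure X} {t : Set X}
    {f : X → ℝ} (a : ℝ) (ht₀ : μ t ≠ 0) (ht : μ t ≠ ⊤) (hf : IntegrableOn f t μ)
    (hf2 : IntegrableOn (fun x => (a - f x) ^ 2) t μ) :
    (a - ⨍ x in t, f x ∂μ) ^ 2 ≤ ⨍ x in t, (a - f x) ^ 2 ∂μ := by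
  have h_const : IntegrableOn (fun _ => a) t μ := integrableOn_const ht
  have h_sub : a - ⨍ x in t, f x ∂μ = ⨍ x in t, (a - f x) ∂μ := by
    rw [setAverage_eq, setAverage_eq, integral_sub h_const hf, setIntegral_const, smul_sub,
      inv_smul_smul₀ (measureReal_ne_zero_iff ht |>.2 ht₀)]
  have h_jensen := abs_setAverage_rpow_le (f := fun x => a - f x) (q := 2) ht₀ ht one_le_two
    (h_const.sub hf) (by simpa only [rpow_two, sq_abs] using hf2)
  simpa only [rpow_two, sq_abs, ← h_sub] using h_jensen

lemma _root_.MemHs.integrableOn_ball [Subcritical N s] (hu : Hs N s u) (x : Euc N) (r : ℝ) :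
    IntegrableOn u (Metric.ball x r) := by
  have h_loc : LocallyIntegrable u volume := hu.memLp.locallyIntegrable <| by
    rw [← ENNReal.ofReal_one]
    exact ENNReal.ofReal_le_ofReal (one_le_two.trans (two_lt_twoStar N s).le)
  exact (h_loc.integrableOn_isCompact (isCompact_closedBall x r)).mono_set
    Metric.ball_subset_closedBall

/-- The density `∫ |u(x)-u(y)|²/|x-y|^{N+2s} dy` of the squared Gagliardo seminorm. -/
def gagDens (N : ℕ) (s : ℝ) (u : Euc N → ℝ) (x : Euc N) : ℝ := ∫ y, diffQuot N s u (x, y) ^ 2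

lemma gagDens_nonneg (u : Euc N → ℝ) (x : Euc N) : 0 ≤ gagDens N s u x :=
  integral_nonneg fun _ => sq_nonneg _

lemma integrable_gagDens (hu : Hs N s u) : Integrable (gagDens N s u) :=
  hu.integrable_diffQuot_sq.integral_prod_left

lemma integral_gagDens (hu : Hs N s u) : ∫ x, gagDens N s u x = gagSq N s u := by
  rw [gagSq_eq]
  exact (integral_prod _ hu.integrable_diffQuot_sq).symm

lemma ae_integrable_slice (hu : Hs N s u) :
    ∀ᵐ x, Integrable fun y => diffQuot N s u (x, y) ^ 2 :=
  Integrable.prod_right_ae hu.integrable_diffQuot_sq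

lemma sq_sub_le_of_dist_lt [Subcritical N s] (u : Euc N → ℝ) {x y : Euc N} {r : ℝ}
    (hxy : dist x y < r) :
    (u x - u y) ^ 2 ≤ r ^ N * r ^ (2 * s) * diffQuot N s u (x, y) ^ 2 := by
  rcases eq_or_ne x y with rfl | hne
  · simp [diffQuot]
  have hd : 0 < dist x y := dist_pos.2 hne
  have hr : 0 < r := hd.trans hxy
  rw [diffQuot_sq, ← rpow_natCast r N, ← rpow_add hr, mul_div_assoc', le_div_iff₀ (by positivity),
    mul_comm]
  gcongr
  exact (add_two_mul_pos N s).le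

lemma sq_sub_ballAvg_le [Subcritical N s] (hu : Hs N s u) {x : Euc N}
    (hx : Integrable fun y => diffQuot N s u (x, y) ^ 2) {r : ℝ} (hr : 0 < r) :
    (u x - ballAvg u x r) ^ 2 ≤ (ballVol N)⁻¹ * r ^ (2 * s) * gagDens N s u x := by
  have hω := ballVol_pos (N := N)
  have h_bound : ∀ y ∈ Metric.ball x r,
      (u x - u y) ^ 2 ≤ r ^ N * r ^ (2 * s) * diffQuot N s u (x, y) ^ 2 := fun y hy =>
    sq_sub_le_of_dist_lt u (by rwa [dist_comm])
  have h_sq : IntegrableOn (fun y => (u x - u y) ^ 2) (Metric.ball x r) := by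
    refine Integrable.mono' (hx.const_mul (r ^ N * r ^ (2 * s))).integrableOn ?_ ?_
    · have := hu.meas
      fun_prop
    · filter_upwards [ae_restrict_mem measurableSet_ball] with y hy
      rw [norm_of_nonneg (sq_nonneg _)]
      exact h_bound y hy
  have h_int : ∫ y in Metric.ball x r, (u x - u y) ^ 2 ≤ r ^ N * r ^ (2 * s) * gagDens N s u x :=
    calc ∫ y in Metric.ball x r, (u x - u y) ^ 2
        ≤ ∫ y in Metric.ball x r, r ^ N * r ^ (2 * s) * diffQuot N s u (x, y) ^ 2 :=
          setIntegral_mono_on h_sq (hx.const_mul _).integrableOn measurableSet_ball h_bound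
      _ ≤ ∫ y, r ^ N * r ^ (2 * s) * diffQuot N s u (x, y) ^ 2 :=
          setIntegral_le_integral (hx.const_mul _) (ae_of_all _ fun y => by positivity)
      _ = r ^ N * r ^ (2 * s) * gagDens N s u x := integral_const_mul _ _
  calc (u x - ballAvg u x r) ^ 2 ≤ ⨍ y in Metric.ball x r, (u x - u y) ^ 2 :=
        sq_sub_setAverage_le (u x) (Metric.measure_ball_pos _ _ hr).ne' measure_ball_lt_top.ne
          (hu.integrableOn_ball x r) h_sq
    _ = (r ^ N * ballVol N)⁻¹ * ∫ y in Metric.ball x r, (u x - u y) ^ 2 := by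
        rw [setAverage_eq, volume_real_ball x hr, smul_eq_mul]
    _ ≤ (r ^ N * ballVol N)⁻¹ * (r ^ N * r ^ (2 * s) * gagDens N s u x) := by gcongr
    _ = (ballVol N)⁻¹ * r ^ (2 * s) * gagDens N s u x := by field_simp

lemma ballVol_mul_scaledAvg_rpow_le [Subcritical N s] (hu : Hs N s u) (x : Euc N) {r : ℝ}
    (hr : 0 < r) :
    ballVol N * scaledAvg s u x r ^ twoStar N s ≤
      ∫ y in Metric.ball x r, |u y| ^ twoStar N s := by
  have hω := ballVol_pos (N := N)
  have h_jensen : |ballAvg u x r| ^ twoStar N s ≤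
      (r ^ N * ballVol N)⁻¹ * ∫ y in Metric.ball x r, |u y| ^ twoStar N s := by
    rw [← volume_real_ball x hr, ← smul_eq_mul, ← setAverage_eq]
    exact abs_setAverage_rpow_le (Metric.measure_ball_pos _ _ hr).ne' measure_ball_lt_top.ne
      (by linarith [two_lt_twoStar N s]) (hu.integrableOn_ball x r) hu.lp.integrableOn
  rw [inv_mul_eq_div, le_div_iff₀ (by positivity)] at h_jensen
  rw [scaledAvg, mul_rpow (by positivity) (abs_nonneg _), ← rpow_mul hr.le, scaleExp_mul_twoStar,
    rpow_natCast]
  linarith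

lemma abs_rpow_twoStar_le_gagDens [Subcritical N s] (hu : Hs N s u) {M : ℝ} (hM : 0 < M)
    {x : Euc N} (hx : Integrable fun y => diffQuot N s u (x, y) ^ 2)
    (hav : ∀ r, 0 < r → scaledAvg s u x r ≤ M) :
    |u x| ^ twoStar N s ≤
      4 * (ballVol N)⁻¹ * (2 * M) ^ (twoStar N s - 2) * gagDens N s u x := by
  have hω := ballVol_pos (N := N)
  have hD := gagDens_nonneg (s := s) u x
  rcases eq_or_ne (u x) 0 with h0 | h0
  · rw [h0, abs_zero, zero_rpow (twoStar_pos N s).ne']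
    positivity
  have ha : 0 < |u x| := abs_pos.2 h0
  have hα := scaleExp_pos N s
  -- The radius at which the bound `M` forces the mean value to be at most half of `|u x|`.
  obtain ⟨r, hr, hr_scale⟩ : ∃ r : ℝ, 0 < r ∧ r ^ scaleExp N s = 2 * M / |u x| :=
    ⟨(2 * M / |u x|) ^ (scaleExp N s)⁻¹, by positivity, rpow_inv_rpow (by positivity) hα.ne'⟩
  have hr_two : r ^ (2 * s) = (2 * M) ^ (twoStar N s - 2) / |u x| ^ (twoStar N s - 2) := by
    rw [← div_rpow (by positivity) ha.le, ← hr_scale, ← rpow_mul hr.le, mul_sub,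
      scaleExp_mul_twoStar, scaleExp]
    ring_nf
  have h_avg : |ballAvg u x r| ≤ |u x| / 2 := by
    have := hav r hr
    rw [scaledAvg, hr_scale, div_mul_eq_mul_div, div_le_iff₀ ha] at this
    nlinarith
  have h_half : |u x| / 2 ≤ |u x - ballAvg u x r| := by
    linarith [abs_sub_abs_le_abs_sub (u x) (ballAvg u x r)]
  have h_sq : (|u x| / 2) ^ 2 ≤ (ballVol N)⁻¹ * r ^ (2 * s) * gagDens N s u x := by
    refine le_trans ?_ (sq_sub_ballAvg_le hu hx hr)
    rw [← sq_abs (u x - _)]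
    gcongr
  calc |u x| ^ twoStar N s = 4 * (|u x| / 2) ^ 2 * |u x| ^ (twoStar N s - 2) := by
        rw [rpow_sub ha, rpow_two]
        field_simp
        norm_num
    _ ≤ 4 * ((ballVol N)⁻¹ * r ^ (2 * s) * gagDens N s u x) * |u x| ^ (twoStar N s - 2) := by
        gcongr
    _ = 4 * (ballVol N)⁻¹ * (2 * M) ^ (twoStar N s - 2) * gagDens N s u x := by
        rw [hr_two]
        field_simp

theorem critInt_le_of_scaledAvg_le [Subcritical N s] (hu : Hs N s u) {M : ℝ} (hM : 0 < M)
    (hav : ∀ x r, 0 < r → scaledAvg s u x r ≤ M) :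
    critInt N s u ≤ 4 * (ballVol N)⁻¹ * (2 * M) ^ (twoStar N s - 2) * gagSq N s u := by
  rw [critInt, ← integral_gagDens hu, ← integral_const_mul]
  refine integral_mono_ae hu.lp ((integrable_gagDens hu).const_mul _) ?_
  filter_upwards [ae_integrable_slice hu] with x hx
  exact abs_rpow_twoStar_le_gagDens hu hM hx (hav x)

lemma scaledAvg_le_critInt [Subcritical N s] (hu : Hs N s u) (x : Euc N) {r : ℝ} (hr : 0 < r) :
    scaledAvg s u x r ≤ ((ballVol N)⁻¹ * critInt N s u) ^ (twoStar N s)⁻¹ := by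
  have hω := ballVol_pos (N := N)
  have h_mass := (ballVol_mul_scaledAvg_rpow_le hu x hr).trans
    (setIntegral_le_integral hu.lp (ae_of_all _ fun y => by positivity))
  rw [le_rpow_inv_iff_of_pos (by unfold scaledAvg; positivity)
    (mul_nonneg (by positivity) (critInt_nonneg u)) (twoStar_pos N s), inv_mul_eq_div,
    le_div_iff₀ hω, mul_comm]
  exact h_mass

lemma le_rpow_of_le_mul_rpow {X A θ : ℝ} (hX : 0 ≤ X) (hA : 0 ≤ A) (hθ : θ < 1)
    (h : X ≤ A * X ^ θ) : X ≤ A ^ (1 - θ)⁻¹ := by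
  rcases hX.eq_or_lt with rfl | hX
  · positivity
  rw [le_rpow_inv_iff_of_pos hX.le hA (sub_pos.2 hθ), rpow_sub hX, rpow_one,
    div_le_iff₀ (by positivity)]
  exact h

theorem exists_sobolev (N : ℕ) (s : ℝ) [Subcritical N s] :
    ∃ C, 0 < C ∧ ∀ u, Hs N s u → critInt N s u ≤ C * gagSq N s u ^ (twoStar N s / 2) := by
  have hω := ballVol_pos (N := N)
  have hp := twoStar_pos N s
  set p := twoStar N s
  set K : ℝ := 4 * (ballVol N)⁻¹ * (2 ^ (p - 2) * (ballVol N)⁻¹ ^ ((p - 2) / p))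
  refine ⟨K ^ (p / 2), by positivity, fun u hu => ?_⟩
  have hG := gagSq_nonneg (s := s) u
  have hX := critInt_nonneg (s := s) u
  rcases hX.eq_or_lt with h0 | h0
  · rw [← h0]
    positivity
  have h_improved : critInt N s u ≤ K * gagSq N s u * critInt N s u ^ ((p - 2) / p) := by
    refine (critInt_le_of_scaledAvg_le hu (M := ((ballVol N)⁻¹ * critInt N s u) ^ p⁻¹)
      (by positivity) fun x r hr => scaledAvg_le_critInt hu x hr).trans_eq ?_
    rw [mul_rpow (by positivity) (by positivity), ← rpow_mul (by positivity),
      mul_rpow (by positivity) h0.le, inv_mul_eq_div]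
    ring
  have h_exp : (1 - (p - 2) / p)⁻¹ = p / 2 := by
    field_simp
    ring
  have h_absorbed := le_rpow_of_le_mul_rpow hX (by positivity)
    ((div_lt_one hp).2 (by linarith)) h_improved
  rwa [h_exp, mul_rpow (by positivity) hG] at h_absorbed

theorem exists_sobolev_norm (N : ℕ) (s : ℝ) [Subcritical N s] :
    ∃ C, 0 < C ∧ ∀ u, Hs N s u → critInt N s u ^ (twoStar N s)⁻¹ ≤ C * √(gagSq N s u) := by
  obtain ⟨C, hC₀, hC⟩ := exists_sobolev N s
  have hp := twoStar_pos N s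
  refine ⟨C ^ (twoStar N s)⁻¹, by positivity, fun u hu => ?_⟩
  have hG := gagSq_nonneg (s := s) u
  calc critInt N s u ^ (twoStar N s)⁻¹
      ≤ (C * gagSq N s u ^ (twoStar N s / 2)) ^ (twoStar N s)⁻¹ := by
        gcongr
        · exact critInt_nonneg u
        · exact hC u hu
    _ = C ^ (twoStar N s)⁻¹ * √(gagSq N s u) := by
        rw [mul_rpow hC₀.le (by positivity), ← rpow_mul hG, sqrt_eq_rpow]
        field_simp

/-! ### `Ḣ^s(ℝ^N)` as a Hilbert space -/

lemma exists_inner_eq_of_isClosed_range {V H : Type*} [AddCommGroup V] [Module ℝ V]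
    [NormedAddCommGroup H] [InnerProductSpace ℝ H] [CompleteSpace H] {T : V →ₗ[ℝ] H}
    (hT : IsClosed (T.range : Set H)) {ℓ : V →ₗ[ℝ] ℝ} {K : ℝ} (hℓ : ∀ v, |ℓ v| ≤ K * ‖T v‖) :
    ∃ w, ∀ v, ℓ v = inner ℝ (T w) (T v) := by
  have : CompleteSpace T.range := hT.completeSpace_coe
  have h_ker : T.ker ≤ ℓ.ker := fun v hv => by
    simpa [LinearMap.mem_ker.1 hv] using hℓ v
  let ℓ' : T.range →ₗ[ℝ] ℝ := T.ker.liftQ ℓ h_ker ∘ₗ T.quotKerEquivRange.symm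
  have hℓ' : ∀ v, ℓ' (T.rangeRestrict v) = ℓ v := fun v => by
    have : T.rangeRestrict v = T.quotKerEquivRange (T.ker.mkQ v) := rfl
    simp only [ℓ', this, LinearMap.comp_apply, LinearEquiv.coe_coe, LinearEquiv.symm_apply_apply,
      Submodule.mkQ_apply, Submodule.liftQ_apply]
  let L : StrongDual ℝ T.range := ℓ'.mkContinuous K fun F => by
    obtain ⟨v, rfl⟩ := T.surjective_rangeRestrict F
    rw [hℓ']
    exact hℓ v
  obtain ⟨w, hw⟩ := T.surjective_rangeRestrict ((InnerProductSpace.toDual ℝ T.range).symm L)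
  refine ⟨w, fun v => ?_⟩
  calc ℓ v = L (T.rangeRestrict v) := (hℓ' v).symm
    _ = inner ℝ (T.rangeRestrict w) (T.rangeRestrict v) := by
        rw [hw, InnerProductSpace.toDual_symm_apply]

lemma exists_weak_limit_of_isClosed_range {V H : Type*} [AddCommGroup V] [Module ℝ V]
    [NormedAddCommGroup H] [InnerProductSpace ℝ H] [CompleteSpace H]
    [TopologicalSpace.SeparableSpace H] {T : V →ₗ[ℝ] H} (hT : IsClosed (T.range : Set H))
    {w : ℕ → V} {R : ℝ} (hw : ∀ k, ‖T (w k)‖ ≤ R) :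
    ∃ (w₀ : V) (φ : ℕ → ℕ), StrictMono φ ∧ ∀ v,
      Tendsto (fun k => inner ℝ (T (w (φ k))) (T v)) atTop (𝓝 (inner ℝ (T w₀) (T v))) := by
  have : CompleteSpace T.range := hT.completeSpace_coe
  let f : ℕ → WeakDual ℝ H := fun k =>
    StrongDual.toWeakDual (InnerProductSpace.toDual ℝ H (T (w k)))
  have hf : ∀ k, f k ∈ WeakDual.toStrongDual ⁻¹' Metric.closedBall (0 : StrongDual ℝ H) R :=
    fun k => (mem_closedBall_zero_iff (E := StrongDual ℝ H)).2 <|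
      ((InnerProductSpace.toDual ℝ H).norm_map (T (w k))).trans_le (hw k)
  obtain ⟨g, -, φ, hφ, hg⟩ := WeakDual.isSeqCompact_closedBall ℝ H 0 R hf
  -- The limit is moved into the range by orthogonal projection, which does not affect the pairing.
  let F : H := (InnerProductSpace.toDual ℝ H).symm (WeakDual.toStrongDual g)
  obtain ⟨w₀, hw₀⟩ := T.surjective_rangeRestrict (T.range.orthogonalProjectionOnto F)
  refine ⟨w₀, φ, hφ, fun v => ?_⟩
  have h_limit : inner ℝ (T w₀) (T v) = g (T v) := by
    calc inner ℝ (T w₀) (T v)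
        = inner ℝ (T.range.orthogonalProjectionOnto F) (T.rangeRestrict v) := by
          rw [← hw₀]
          rfl
      _ = inner ℝ F (T v) := T.range.inner_orthogonalProjectionOnto_eq_of_mem_right _ _
      _ = g (T v) := InnerProductSpace.toDual_symm_apply
  rw [h_limit]
  exact ((WeakDual.eval_continuous (T v)).tendsto g).comp hg

lemma cauchySeq_of_dist_le_mul {α β : Type*} [PseudoMetricSpace α] [PseudoMetricSpace β]
    {f : ℕ → α} {g : ℕ → β} {C : ℝ} (h : ∀ k l, dist (f k) (f l) ≤ C * dist (g k) (g l))
    (hg : CauchySeq g) : CauchySeq f := by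
  rw [cauchySeq_iff_tendsto_dist_atTop_0] at hg ⊢
  exact squeeze_zero (fun _ => dist_nonneg) (fun n => h n.1 n.2) (by simpa using hg.const_mul C)

lemma exists_subseq_tendsto_ae {X : Type*} [MeasurableSpace X] {μ : Measure X} {p : ENNReal}
    [Fact (1 ≤ p)] {f : ℕ → X → ℝ} (hf : ∀ k, MemLp (f k) p μ) {F : Lp ℝ p μ}
    (hF : Tendsto (fun k => (hf k).toLp) atTop (𝓝 F)) :
    ∃ φ : ℕ → ℕ, StrictMono φ ∧ ∀ᵐ x ∂μ, Tendsto (fun k => f (φ k) x) atTop (𝓝 (F x)) := by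
  obtain ⟨φ, hφ, h_ae⟩ := (tendstoInMeasure_of_tendsto_Lp hF).exists_seq_tendsto_ae
  refine ⟨φ, hφ, ?_⟩
  filter_upwards [h_ae, ae_all_iff.2 fun k => (hf k).coeFn_toLp] with x hx h_coe
  simpa only [h_coe] using hx

instance [Subcritical N s] : Fact (1 ≤ ENNReal.ofReal (twoStar N s)) where
  out := by
    rw [← ENNReal.ofReal_one]
    exact ENNReal.ofReal_le_ofReal (one_le_two.trans (two_lt_twoStar N s).le)

/-- `Ḣ^s(ℝ^N)` as a space of functions, not identified almost everywhere. -/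
def hsFun (N : ℕ) (s : ℝ) [Subcritical N s] : Submodule ℝ (Euc N → ℝ) where
  carrier := {u | Hs N s u}
  add_mem' := MemHs.add
  zero_mem' := hs_zero
  smul_mem' c _ hu := MemHs.smul hu c

lemma hs_coe [Subcritical N s] (u : hsFun N s) : Hs N s u := u.2

/-- The embedding of `Ḣ^s(ℝ^N)` in `L²(ℝ^N × ℝ^N)` given by the difference quotients. -/
def toL2 (N : ℕ) (s : ℝ) [Subcritical N s] :
    hsFun N s →ₗ[ℝ] Lp ℝ 2 (volume : Measure (Euc N × Euc N)) where
  toFun u := (hs_coe u).memLp_diffQuot.toLp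
  map_add' u v := by
    rw [← MemLp.toLp_add]
    exact MemLp.toLp_congr _ _ (.of_eq (diffQuot_add _ _))
  map_smul' c u := by
    rw [RingHom.id_apply, ← MemLp.toLp_const_smul]
    exact MemLp.toLp_congr _ _ (.of_eq (diffQuot_smul _ _))

/-- The embedding of `Ḣ^s(ℝ^N)` in the critical Lebesgue space. -/
def toLCrit (N : ℕ) (s : ℝ) [Subcritical N s] :
    hsFun N s →ₗ[ℝ] Lp ℝ (ENNReal.ofReal (twoStar N s)) (volume : Measure (Euc N)) where
  toFun u := (hs_coe u).memLp.toLp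
  map_add' u v := by
    rw [← MemLp.toLp_add]
    rfl
  map_smul' c u := by
    rw [RingHom.id_apply, ← MemLp.toLp_const_smul]
    rfl

lemma inner_toL2 [Subcritical N s] (u v : hsFun N s) :
    inner ℝ (toL2 N s u) (toL2 N s v) = gagInner N s u v := by
  rw [L2.inner_def, gagInner_eq]
  refine integral_congr_ae ?_
  filter_upwards [(hs_coe u).memLp_diffQuot.coeFn_toLp, (hs_coe v).memLp_diffQuot.coeFn_toLp]
    with p hu hv
  simp only [toL2, LinearMap.coe_mk, AddHom.coe_mk, hu, hv, RCLike.inner_apply', conj_trivial]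

lemma norm_toL2 [Subcritical N s] (u : hsFun N s) : ‖toL2 N s u‖ = √(gagSq N s u) := by
  rw [← gagInner_self, ← inner_toL2, real_inner_self_eq_norm_sq, sqrt_sq (norm_nonneg _)]

lemma norm_toLCrit [Subcritical N s] (u : hsFun N s) :
    ‖toLCrit N s u‖ = critInt N s u ^ (twoStar N s)⁻¹ := by
  have hp := twoStar_pos N s
  simp only [toLCrit, LinearMap.coe_mk, AddHom.coe_mk, Lp.norm_toLp]
  rw [(hs_coe u).memLp.eLpNorm_eq_integral_rpow_norm (by simpa using hp) ENNReal.ofReal_ne_top,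
    ENNReal.toReal_ofReal hp.le, ENNReal.toReal_ofReal (by positivity)]
  rfl

lemma exists_norm_toLCrit_le (N : ℕ) (s : ℝ) [Subcritical N s] :
    ∃ C, ∀ u : hsFun N s, ‖toLCrit N s u‖ ≤ C * ‖toL2 N s u‖ := by
  obtain ⟨C, -, hC⟩ := exists_sobolev_norm N s
  exact ⟨C, fun u => by simpa only [norm_toLCrit, norm_toL2] using hC u (hs_coe u)⟩

lemma isClosed_range_toL2 (N : ℕ) (s : ℝ) [Subcritical N s] :
    IsClosed ((toL2 N s).range : Set (Lp ℝ 2 (volume : Measure (Euc N × Euc N)))) := by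
  refine IsSeqClosed.isClosed fun F F₀ hF hF₀ => ?_
  choose u hu using hF
  obtain rfl : (fun k => toL2 N s (u k)) = F := funext hu
  obtain ⟨C, hC⟩ := exists_norm_toLCrit_le N s
  have h_cauchy : CauchySeq fun k => toLCrit N s (u k) :=
    cauchySeq_of_dist_le_mul (fun k l => by
      simpa only [dist_eq_norm, ← map_sub] using hC (u k - u l)) hF₀.cauchySeq
  obtain ⟨U, hU⟩ := cauchySeq_tendsto_of_complete h_cauchy
  obtain ⟨φ, hφ, hφ_ae⟩ := exists_subseq_tendsto_ae (fun k => (hs_coe (u k)).memLp) hU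
  obtain ⟨ψ, hψ, hψ_ae⟩ := exists_subseq_tendsto_ae
    (fun k => (hs_coe (u (φ k))).memLp_diffQuot) (hF₀.comp hφ.tendsto_atTop)
  have h_ae : ∀ᵐ x, Tendsto (fun k => (u (φ (ψ k)) : Euc N → ℝ) x) atTop (𝓝 (U x)) := by
    filter_upwards [hφ_ae] with x hx using hx.comp hψ.tendsto_atTop
  have hF₀_eq : F₀ =ᵐ[volume] diffQuot N s U := by
    filter_upwards [Measure.quasiMeasurePreserving_fst.ae h_ae,
      Measure.quasiMeasurePreserving_snd.ae h_ae, hψ_ae] with p hp₁ hp₂ hp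
    exact tendsto_nhds_unique hp ((hp₁.sub hp₂).mul_const _)
  have hU_hs : Hs N s U := hs_iff.2
    ⟨(Lp.stronglyMeasurable U).measurable, Lp.memLp U, (Lp.memLp F₀).ae_eq hF₀_eq⟩
  exact ⟨⟨U, hU_hs⟩, Lp.ext (hU_hs.memLp_diffQuot.coeFn_toLp.trans hF₀_eq.symm)⟩

theorem exists_gagInner_eq [Subcritical N s] (ℓ : hsFun N s →ₗ[ℝ] ℝ) {K : ℝ}
    (hℓ : ∀ v, |ℓ v| ≤ K * √(gagSq N s v)) :
    ∃ w, Hs N s w ∧ ∀ v : hsFun N s, ℓ v = gagInner N s w v := by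
  obtain ⟨w, hw⟩ := exists_inner_eq_of_isClosed_range (isClosed_range_toL2 N s) (ℓ := ℓ) (K := K)
    fun v => by simpa only [norm_toL2] using hℓ v
  exact ⟨w, hs_coe w, fun v => by rw [hw, inner_toL2]⟩

theorem exists_weak_limit [Subcritical N s] {w : ℕ → Euc N → ℝ} (hw : ∀ k, Hs N s (w k))
    {R : ℝ} (hR : ∀ k, gagSq N s (w k) ≤ R) :
    ∃ (w₀ : Euc N → ℝ) (φ : ℕ → ℕ), Hs N s w₀ ∧ StrictMono φ ∧ ∀ v, Hs N s v →
      Tendsto (fun k => gagInner N s (w (φ k)) v) atTop (𝓝 (gagInner N s w₀ v)) := by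
  have : Fact ((2 : ENNReal) ≠ ⊤) := ⟨ENNReal.ofNat_ne_top⟩
  have h_gen : MeasurableSpace.CountablyGenerated (Euc N × Euc N) := inferInstance
  have : MeasureTheory.IsSeparable (volume : Measure (Euc N × Euc N)) :=
    @instIsSeparableOfCountablyGeneratedOfSFinite _ _ _ h_gen inferInstance
  have : SecondCountableTopology (Lp ℝ 2 (volume : Measure (Euc N × Euc N))) :=
    Lp.SecondCountableTopology
  obtain ⟨w₀, φ, hφ, h_lim⟩ := exists_weak_limit_of_isClosed_range (isClosed_range_toL2 N s)
    (w := fun k => ⟨w k, hw k⟩) fun k => by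
      rw [norm_toL2]
      exact sqrt_le_sqrt (hR k)
  refine ⟨w₀, φ, hs_coe w₀, hφ, fun v hv => ?_⟩
  simpa only [inner_toL2] using h_lim ⟨v, hv⟩

lemma ae_eq_zero_of_critInt_eq_zero [Subcritical N s] (hu : Hs N s u) (h0 : critInt N s u = 0) :
    u =ᵐ[volume] 0 := by
  filter_upwards [(integral_eq_zero_iff_of_nonneg (fun x => by positivity) hu.lp).1 h0] with x hx
  simpa using (rpow_eq_zero (abs_nonneg _) (twoStar_pos N s).ne').1 hx

lemma critInt_eq_zero_of_gagSq_eq_zero [Subcritical N s] (hu : Hs N s u) (h0 : gagSq N s u = 0) :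
    critInt N s u = 0 := by
  obtain ⟨C, -, hC⟩ := exists_sobolev N s
  refine le_antisymm ((hC u hu).trans_eq ?_) (critInt_nonneg _)
  rw [h0, zero_rpow (half_pos (twoStar_pos N s)).ne', mul_zero]

lemma ae_eq_of_gagInner_eq [Subcritical N s] (hu : Hs N s u) (hv : Hs N s v)
    (huv : gagInner N s u (u - v) = gagInner N s v (u - v)) : u =ᵐ[volume] v := by
  have h_gag : gagSq N s (u - v) = 0 := by
    rw [← gagInner_self, gagInner_sub_left hu hv (hu.sub hv), huv, sub_self]
  have h_zero := ae_eq_zero_of_critInt_eq_zero (hu.sub hv)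
    (critInt_eq_zero_of_gagSq_eq_zero (hu.sub hv) h_gag)
  filter_upwards [h_zero] with x hx
  exact sub_eq_zero.1 hx

/-! ### Compactness in weighted `L²` -/

lemma exists_abs_ballAvg_le (N : ℕ) (s : ℝ) [Subcritical N s] :
    ∃ K, 0 < K ∧ ∀ u, Hs N s u → ∀ x r, 0 < r →
      |ballAvg u x r| ≤ K * √(gagSq N s u) / r ^ scaleExp N s := by
  have hω := ballVol_pos (N := N)
  obtain ⟨C, hC₀, hC⟩ := exists_sobolev_norm N s
  refine ⟨(ballVol N)⁻¹ ^ (twoStar N s)⁻¹ * C, by positivity, fun u hu x r hr => ?_⟩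
  rw [le_div_iff₀ (by positivity), mul_comm |_|]
  calc scaledAvg s u x r ≤ ((ballVol N)⁻¹ * critInt N s u) ^ (twoStar N s)⁻¹ :=
        scaledAvg_le_critInt hu x hr
    _ = (ballVol N)⁻¹ ^ (twoStar N s)⁻¹ * critInt N s u ^ (twoStar N s)⁻¹ :=
        mul_rpow (by positivity) (critInt_nonneg u)
    _ ≤ (ballVol N)⁻¹ ^ (twoStar N s)⁻¹ * (C * √(gagSq N s u)) := by
        gcongr
        exact hC u hu
    _ = (ballVol N)⁻¹ ^ (twoStar N s)⁻¹ * C * √(gagSq N s u) := by ring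

lemma ballAvg_add (x : Euc N) {r : ℝ} (hu : IntegrableOn u (Metric.ball x r))
    (hv : IntegrableOn v (Metric.ball x r)) :
    ballAvg (u + v) x r = ballAvg u x r + ballAvg v x r := by
  simp only [ballAvg, setAverage_eq, Pi.add_apply]
  rw [integral_add hu hv, smul_add]

lemma ballAvg_smul (c : ℝ) (u : Euc N → ℝ) (x : Euc N) (r : ℝ) :
    ballAvg (c • u) x r = c * ballAvg u x r := by
  simp only [ballAvg, setAverage_eq, Pi.smul_apply, smul_eq_mul]
  rw [integral_const_mul]
  ring

lemma exists_ballAvg_eq_gagInner [Subcritical N s] (x : Euc N) {r : ℝ} (hr : 0 < r) :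
    ∃ g, Hs N s g ∧ ∀ v, Hs N s v → ballAvg v x r = gagInner N s g v := by
  obtain ⟨K, -, hK⟩ := exists_abs_ballAvg_le N s
  let ℓ : hsFun N s →ₗ[ℝ] ℝ :=
    { toFun := fun v => ballAvg v x r
      map_add' := fun u v => ballAvg_add x ((hs_coe u).integrableOn_ball x r)
        ((hs_coe v).integrableOn_ball x r)
      map_smul' := fun c u => ballAvg_smul c u x r }
  obtain ⟨g, hg, hgv⟩ := exists_gagInner_eq ℓ (K := K / r ^ scaleExp N s) fun v => by
    rw [div_mul_eq_mul_div]
    exact hK v (hs_coe v) x r hr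
  exact ⟨g, hg, fun v hv => hgv ⟨v, hv⟩⟩

lemma measurable_ballAvg (hu : Measurable u) (r : ℝ) : Measurable fun x => ballAvg u x r := by
  have h_set : MeasurableSet {p : Euc N × Euc N | dist p.2 p.1 < r} :=
    measurableSet_lt (by fun_prop) measurable_const
  have h_indicator : StronglyMeasurable
      ({p : Euc N × Euc N | dist p.2 p.1 < r}.indicator fun p => u p.2) :=
    ((hu.comp measurable_snd).indicator h_set).stronglyMeasurable
  have h_int : Measurable fun x => ∫ y in Metric.ball x r, u y := by
    convert (h_indicator.integral_prod_right' (ν := (volume : Measure (Euc N)))).measurable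
      using 2 with x
    rw [← integral_indicator measurableSet_ball]
    rfl
  simp only [ballAvg, setAverage_eq, smul_eq_mul, measureReal_def,
    Measure.addHaar_ball_center volume _ r]
  exact h_int.const_mul _

/-- A positive weight, integrable on `ℝ^N` and bounded by `1`. -/
def weight (N : ℕ) (x : Euc N) : ℝ := (1 + ‖x‖) ^ (-((N : ℝ) + 1))

lemma weight_pos (x : Euc N) : 0 < weight N x := by
  unfold weight
  positivity

lemma weight_le_one (x : Euc N) : weight N x ≤ 1 :=
  rpow_le_one_of_one_le_of_nonpos (by linarith [norm_nonneg x])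
    (by linarith [N.cast_nonneg (α := ℝ)])

lemma integrable_weight : Integrable (weight N) :=
  integrable_one_add_norm (by simp)

lemma measurable_weight : Measurable (weight N) := by
  unfold weight
  fun_prop

lemma le_weight_of_norm_le {x : Euc N} {R : ℝ} (hx : ‖x‖ ≤ R) :
    (1 + R) ^ (-((N : ℝ) + 1)) ≤ weight N x :=
  rpow_le_rpow_of_nonpos (by positivity) (by linarith) (by linarith [N.cast_nonneg (α := ℝ)])

lemma weight_mul_sq_le [Subcritical N s] (hu : Hs N s u) {r : ℝ} (hr : 0 < r) :
    ∀ᵐ x, weight N x * u x ^ 2 ≤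
      2 * ((ballVol N)⁻¹ * r ^ (2 * s) * gagDens N s u x) +
        2 * (weight N x * ballAvg u x r ^ 2) := by
  filter_upwards [ae_integrable_slice hu] with x hx
  have h_split : u x ^ 2 ≤ 2 * (u x - ballAvg u x r) ^ 2 + 2 * ballAvg u x r ^ 2 := by
    nlinarith [sq_nonneg (u x - 2 * ballAvg u x r)]
  have h_osc : weight N x * (u x - ballAvg u x r) ^ 2 ≤
      (ballVol N)⁻¹ * r ^ (2 * s) * gagDens N s u x :=
    (mul_le_of_le_one_left (sq_nonneg _) (weight_le_one x)).trans (sq_sub_ballAvg_le hu hx hr)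
  calc weight N x * u x ^ 2
      ≤ weight N x * (2 * (u x - ballAvg u x r) ^ 2 + 2 * ballAvg u x r ^ 2) :=
        mul_le_mul_of_nonneg_left h_split (weight_pos x).le
    _ ≤ _ := by linarith

lemma integrable_weight_mul_ballAvg_sq [Subcritical N s] (hu : Hs N s u) {r : ℝ} (hr : 0 < r) :
    Integrable fun x => weight N x * ballAvg u x r ^ 2 := by
  obtain ⟨K, -, hK⟩ := exists_abs_ballAvg_le N s
  refine (integrable_weight.mul_const ((K * √(gagSq N s u) / r ^ scaleExp N s) ^ 2)).mono'
    (measurable_weight.mul ((measurable_ballAvg hu.meas r).pow_const 2)).aestronglyMeasurable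
    (ae_of_all _ fun x => ?_)
  have := weight_pos x
  rw [norm_of_nonneg (by positivity), ← sq_abs (ballAvg u x r)]
  gcongr
  exact hK u hu x r hr

lemma integrable_weight_mul_sq [Subcritical N s] (hu : Hs N s u) :
    Integrable fun x => weight N x * u x ^ 2 := by
  have h_dens := ((integrable_gagDens hu).const_mul ((ballVol N)⁻¹ * 1 ^ (2 * s))).const_mul 2
  have h_avg := (integrable_weight_mul_ballAvg_sq hu one_pos).const_mul 2
  refine (h_dens.add h_avg).mono'
    (measurable_weight.mul (hu.meas.pow_const 2)).aestronglyMeasurable ?_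
  filter_upwards [weight_mul_sq_le hu one_pos] with x hx
  rwa [norm_of_nonneg (mul_nonneg (weight_pos x).le (sq_nonneg _))]

lemma integral_weight_mul_sq_le [Subcritical N s] (hu : Hs N s u) {r : ℝ} (hr : 0 < r) :
    ∫ x, weight N x * u x ^ 2 ≤
      2 * ((ballVol N)⁻¹ * r ^ (2 * s) * gagSq N s u) +
        2 * ∫ x, weight N x * ballAvg u x r ^ 2 := by
  have h_dens := ((integrable_gagDens hu).const_mul ((ballVol N)⁻¹ * r ^ (2 * s))).const_mul 2
  have h_avg := (integrable_weight_mul_ballAvg_sq hu hr).const_mul 2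
  calc ∫ x, weight N x * u x ^ 2
      ≤ ∫ x, (2 * ((ballVol N)⁻¹ * r ^ (2 * s) * gagDens N s u x) +
          2 * (weight N x * ballAvg u x r ^ 2)) :=
        integral_mono_ae (integrable_weight_mul_sq hu) (h_dens.add h_avg) (weight_mul_sq_le hu hr)
    _ = _ := by
        rw [integral_add h_dens h_avg, integral_const_mul, integral_const_mul, integral_const_mul,
          integral_gagDens hu]

lemma tendsto_integral_weight_mul_ballAvg_sq [Subcritical N s] {v : ℕ → Euc N → ℝ} {Γ : ℝ}
    (hv : ∀ k, Hs N s (v k)) (hΓ : ∀ k, gagSq N s (v k) ≤ Γ)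
    (hlim : ∀ g, Hs N s g → Tendsto (fun k => gagInner N s (v k) g) atTop (𝓝 0))
    {r : ℝ} (hr : 0 < r) :
    Tendsto (fun k => ∫ x, weight N x * ballAvg (v k) x r ^ 2) atTop (𝓝 0) := by
  obtain ⟨K, hK₀, hK⟩ := exists_abs_ballAvg_le N s
  have h_bound : ∀ k x, ‖weight N x * ballAvg (v k) x r ^ 2‖ ≤
      weight N x * (K * √Γ / r ^ scaleExp N s) ^ 2 := fun k x => by
    have := weight_pos x
    rw [norm_of_nonneg (by positivity), ← sq_abs (ballAvg _ x r)]
    gcongr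
    exact (hK _ (hv k) x r hr).trans (by gcongr; exact hΓ k)
  have h_avg : ∀ x, Tendsto (fun k => ballAvg (v k) x r) atTop (𝓝 0) := fun x => by
    obtain ⟨g, hg, hgv⟩ := exists_ballAvg_eq_gagInner (s := s) x hr
    simpa only [hgv _ (hv _), gagInner_comm g] using hlim g hg
  simpa using tendsto_integral_of_dominated_convergence (f := fun _ => (0 : ℝ)) _
    (fun k => (integrable_weight_mul_ballAvg_sq (hv k) hr).aestronglyMeasurable)
    (integrable_weight.mul_const _) (fun k => ae_of_all _ (h_bound k))
    (ae_of_all _ fun x => by simpa using ((h_avg x).pow 2).const_mul (weight N x))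

theorem tendsto_integral_weight_mul_sq [Subcritical N s] {v : ℕ → Euc N → ℝ} {Γ : ℝ}
    (hv : ∀ k, Hs N s (v k)) (hΓ : ∀ k, gagSq N s (v k) ≤ Γ)
    (hlim : ∀ g, Hs N s g → Tendsto (fun k => gagInner N s (v k) g) atTop (𝓝 0)) :
    Tendsto (fun k => ∫ x, weight N x * v k x ^ 2) atTop (𝓝 0) := by
  have hω := ballVol_pos (N := N)
  have hs := Subcritical.pos N (s := s)
  refine tendsto_order.2 ⟨fun a ha => .of_forall fun k => ha.trans_le <|
    integral_nonneg fun x => mul_nonneg (weight_pos x).le (sq_nonneg _), fun ε hε => ?_⟩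
  have h_small : Tendsto (fun r : ℝ => 2 * ((ballVol N)⁻¹ * r ^ (2 * s) * Γ)) (𝓝[>] 0) (𝓝 0) := by
    have h_rpow : Tendsto (fun r : ℝ => r ^ (2 * s)) (𝓝 0) (𝓝 0) := by
      simpa [zero_rpow (mul_pos two_pos hs).ne'] using
        (continuousAt_rpow_const 0 (2 * s) (.inr (by positivity))).tendsto
    simpa using (((h_rpow.mono_left nhdsWithin_le_nhds).const_mul _).mul_const Γ).const_mul 2
  obtain ⟨r, hrε, hr⟩ :=
    ((h_small.eventually_lt_const (half_pos hε)).and self_mem_nhdsWithin).exists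
  have h_avg := (tendsto_integral_weight_mul_ballAvg_sq hv hΓ hlim hr).const_mul 2
  rw [mul_zero] at h_avg
  filter_upwards [h_avg.eventually_lt_const (half_pos hε)] with k hk
  have h_gag : 2 * ((ballVol N)⁻¹ * r ^ (2 * s) * gagSq N s (v k)) ≤
      2 * ((ballVol N)⁻¹ * r ^ (2 * s) * Γ) := by
    gcongr
    exact hΓ k
  linarith [integral_weight_mul_sq_le (hv k) hr]

lemma exists_subseq_tendsto_ae_of_tendsto_integral {X : Type*} [MeasurableSpace X]
    {μ : Measure X} {f : ℕ → X → ℝ} (hf : ∀ k, Integrable (f k) μ) (hf₀ : ∀ k x, 0 ≤ f k x)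
    (hlim : Tendsto (fun k => ∫ x, f k x ∂μ) atTop (𝓝 0)) :
    ∃ φ : ℕ → ℕ, StrictMono φ ∧ ∀ᵐ x ∂μ, Tendsto (fun k => f (φ k) x) atTop (𝓝 0) := by
  have h_norm : ∀ k, eLpNorm (f k - 0) 1 μ = ENNReal.ofReal (∫ x, f k x ∂μ) := fun k => by
    rw [sub_zero, eLpNorm_one_eq_lintegral_enorm,
      ofReal_integral_eq_lintegral_ofReal (hf k) (ae_of_all _ (hf₀ k))]
    exact lintegral_congr fun x => Real.enorm_of_nonneg (hf₀ k x)
  have h_meas : TendstoInMeasure μ f atTop 0 := by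
    refine tendstoInMeasure_of_tendsto_eLpNorm one_ne_zero (fun k => (hf k).aestronglyMeasurable)
      aestronglyMeasurable_zero ?_
    simpa only [h_norm, ENNReal.ofReal_zero] using ENNReal.tendsto_ofReal hlim
  exact h_meas.exists_seq_tendsto_ae

lemma exists_subseq_tendsto_ae_of_weight [Subcritical N s] {w : ℕ → Euc N → ℝ} {w₀ : Euc N → ℝ}
    (hw : ∀ k, Hs N s (w k)) (hw₀ : Hs N s w₀)
    (hlim : Tendsto (fun k => ∫ x, weight N x * (w k x - w₀ x) ^ 2) atTop (𝓝 0)) :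
    ∃ φ : ℕ → ℕ, StrictMono φ ∧ ∀ᵐ x, Tendsto (fun k => w (φ k) x) atTop (𝓝 (w₀ x)) := by
  obtain ⟨φ, hφ, h_ae⟩ := exists_subseq_tendsto_ae_of_tendsto_integral
    (fun k => integrable_weight_mul_sq ((hw k).sub hw₀))
    (fun _ x => mul_nonneg (weight_pos x).le (sq_nonneg _)) hlim
  refine ⟨φ, hφ, ?_⟩
  filter_upwards [h_ae] with x hx
  have h_sq : Tendsto (fun k => (w (φ k) x - w₀ x) ^ 2) atTop (𝓝 0) := by
    simpa [(weight_pos x).ne'] using hx.const_mul (weight N x)⁻¹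
  have h_abs : Tendsto (fun k => |w (φ k) x - w₀ x|) atTop (𝓝 0) := by
    simpa [sqrt_sq_eq_abs] using h_sq.sqrt
  exact tendsto_sub_nhds_zero_iff.1 ((tendsto_zero_iff_abs_tendsto_zero _).2 h_abs)

theorem exists_weak_limit_ae [Subcritical N s] {w : ℕ → Euc N → ℝ} (hw : ∀ k, Hs N s (w k))
    {R : ℝ} (hR : ∀ k, gagSq N s (w k) ≤ R) :
    ∃ (w₀ : Euc N → ℝ) (φ : ℕ → ℕ), Hs N s w₀ ∧ StrictMono φ ∧
      (∀ v, Hs N s v → Tendsto (fun k => gagInner N s (w (φ k)) v) atTop (𝓝 (gagInner N s w₀ v))) ∧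
      Tendsto (fun k => ∫ x, weight N x * (w (φ k) x - w₀ x) ^ 2) atTop (𝓝 0) ∧
      ∀ᵐ x, Tendsto (fun k => w (φ k) x) atTop (𝓝 (w₀ x)) := by
  obtain ⟨w₀, φ, hw₀, hφ, h_weak⟩ := exists_weak_limit hw hR
  have h_weight : Tendsto (fun k => ∫ x, weight N x * (w (φ k) x - w₀ x) ^ 2) atTop (𝓝 0) := by
    refine tendsto_integral_weight_mul_sq (v := fun k => w (φ k) - w₀)
      (Γ := 2 * R + 2 * gagSq N s w₀) (fun k => (hw _).sub hw₀) (fun k => ?_) fun g hg => ?_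
    · linarith [gagSq_sub_le (hw (φ k)) hw₀, hR (φ k)]
    · simp only [gagInner_sub_left (hw _) hw₀ hg]
      exact tendsto_sub_nhds_zero_iff.2 (h_weak g hg)
  obtain ⟨ψ, hψ, h_ae⟩ := exists_subseq_tendsto_ae_of_weight (fun k => hw (φ k)) hw₀ h_weight
  exact ⟨w₀, φ ∘ ψ, hw₀, hφ.comp hψ, fun v hv => (h_weak v hv).comp hψ.tendsto_atTop,
    h_weight.comp hψ.tendsto_atTop, h_ae⟩

/-! ### Dilations and linear isometries -/

/-- The dilation of `u` around `a` that preserves the Gagliardo seminorm and the critical Lebesgue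
integral: `a + r • x` is sent to `x`. -/
def dil (s : ℝ) (a : Euc N) (r : ℝ) (u : Euc N → ℝ) (x : Euc N) : ℝ :=
  r ^ scaleExp N s * u (a + r • x)

section Affine

variable {E : Type*} [NormedAddCommGroup E] [NormedSpace ℝ E] [FiniteDimensional ℝ E]
  [MeasurableSpace E] [BorelSpace E] (μ : Measure E) [μ.IsAddHaarMeasure] {r : ℝ}

lemma integral_comp_affine (f : E → ℝ) (a : E) (hr : 0 < r) :
    ∫ x, f (a + r • x) ∂μ = (r ^ Module.finrank ℝ E)⁻¹ * ∫ x, f x ∂μ := by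
  rw [Measure.integral_comp_smul μ (fun x => f (a + x)) r, integral_add_left_eq_self f a,
    abs_of_pos (by positivity), smul_eq_mul]

lemma integrable_comp_affine {f : E → ℝ} (hf : Integrable f μ) (a : E) (hr : 0 < r) :
    Integrable (fun x => f (a + r • x)) μ :=
  (integrable_comp_smul_iff μ (fun x => f (a + x)) hr.ne').2 (hf.comp_add_left a)

lemma ae_comp_affine {P : E → Prop} (hP : ∀ᵐ x ∂μ, P x) (a : E) (hr : 0 < r) :
    ∀ᵐ x ∂μ, P (a + r • x) :=
  (Measure.quasiMeasurePreserving_smul μ hr.ne').ae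
    ((measurePreserving_add_left μ a).quasiMeasurePreserving.ae hP)

end Affine

instance : (volume : Measure (Euc N × Euc N)).IsAddHaarMeasure :=
  inferInstanceAs ((volume : Measure (Euc N)).prod volume).IsAddHaarMeasure

section Dilation

variable {a : Euc N} {r : ℝ}

lemma dil_congr (huv : u =ᵐ[volume] v) (a : Euc N) (hr : 0 < r) :
    dil s a r u =ᵐ[volume] dil s a r v := by
  filter_upwards [ae_comp_affine volume huv a hr] with x hx
  simp only [dil, hx]

lemma diffQuot_dil (hr : 0 < r) (u : Euc N → ℝ) (p : Euc N × Euc N) :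
    diffQuot N s (dil s a r u) p = r ^ N * diffQuot N s u ((a, a) + r • p) := by
  have h_dist : dist (a + r • p.1) (a + r • p.2) = r * dist p.1 p.2 := by
    rw [dist_add_left, dist_smul₀, norm_of_nonneg hr.le]
  have h_exp : r ^ scaleExp N s = r ^ N * r ^ (-(((N : ℝ) + 2 * s) / 2)) := by
    rw [← rpow_natCast, ← rpow_add hr, scaleExp]
    ring_nf
  simp only [diffQuot, dil, Prod.fst_add, Prod.snd_add, Prod.smul_fst, Prod.smul_snd, h_dist]
  rw [mul_rpow hr.le dist_nonneg, h_exp]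
  ring

lemma gagSq_dil (hr : 0 < r) (u : Euc N → ℝ) : gagSq N s (dil s a r u) = gagSq N s u := by
  simp only [gagSq_eq, diffQuot_dil hr, mul_pow]
  rw [integral_const_mul, integral_comp_affine volume (fun q => diffQuot N s u q ^ 2) _ hr,
    Module.finrank_prod, finrank_euclideanSpace_fin, ← pow_mul, mul_two]
  field_simp

lemma abs_dil_rpow_twoStar [Subcritical N s] (hr : 0 < r) (u : Euc N → ℝ) (x : Euc N) :
    |dil s a r u x| ^ twoStar N s = r ^ N * |u (a + r • x)| ^ twoStar N s := by
  rw [dil, abs_mul, abs_of_pos (by positivity), mul_rpow (by positivity) (abs_nonneg _),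
    ← rpow_mul hr.le, scaleExp_mul_twoStar, rpow_natCast]

lemma critInt_dil [Subcritical N s] (hr : 0 < r) (u : Euc N → ℝ) :
    critInt N s (dil s a r u) = critInt N s u := by
  simp only [critInt, abs_dil_rpow_twoStar hr]
  rw [integral_const_mul, integral_comp_affine volume (fun y => |u y| ^ twoStar N s) _ hr,
    finrank_euclideanSpace_fin]
  field_simp

lemma _root_.MemHs.dil [Subcritical N s] (hu : Hs N s u) (a : Euc N) (hr : 0 < r) :
    Hs N s (dil s a r u) where
  meas := by
    have := hu.meas
    unfold FracSobolev.dil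
    fun_prop
  lp := by
    simp only [abs_dil_rpow_twoStar hr]
    exact (integrable_comp_affine volume hu.lp a hr).const_mul _
  fin := by
    simp only [GagFinite, ← diffQuot_sq, diffQuot_dil hr, mul_pow]
    exact (integrable_comp_affine volume hu.integrable_diffQuot_sq (a, a) hr).const_mul _
  vanish := by simp

lemma ballAvg_dil (hr : 0 < r) (u : Euc N → ℝ) (y : Euc N) :
    ballAvg (dil s a r u) y 1 = r ^ scaleExp N s * ballAvg u (a + r • y) r := by
  have h_mem : ∀ x, a + r • x ∈ Metric.ball (a + r • y) r ↔ x ∈ Metric.ball y 1 := fun x => by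
    rw [Metric.mem_ball, Metric.mem_ball, dist_add_left, dist_smul₀, norm_of_nonneg hr.le,
      mul_lt_iff_lt_one_right hr]
  have h_indicator : ∀ x, (Metric.ball y 1).indicator (dil s a r u) x =
      r ^ scaleExp N s * (Metric.ball (a + r • y) r).indicator u (a + r • x) := fun x => by
    by_cases hx : x ∈ Metric.ball y 1 <;> simp [Set.indicator, h_mem, hx, dil, -Metric.mem_ball]
  simp only [ballAvg, setAverage_eq, volume_real_ball _ one_pos, volume_real_ball _ hr]
  rw [← integral_indicator measurableSet_ball, ← integral_indicator measurableSet_ball,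
    integral_congr_ae (ae_of_all _ h_indicator), integral_const_mul,
    integral_comp_affine volume _ a hr, finrank_euclideanSpace_fin]
  simp only [one_pow, one_mul, smul_eq_mul, mul_inv]
  ring

lemma scaledAvg_eq_abs_ballAvg_dil (hr : 0 < r) (u : Euc N → ℝ) (y : Euc N) :
    scaledAvg s u (a + r • y) r = |ballAvg (dil s a r u) y 1| := by
  rw [ballAvg_dil hr, abs_mul, abs_of_pos (by positivity), scaledAvg]

end Dilation

section Isometry

variable (g : Euc N ≃ₗᵢ[ℝ] Euc N)

lemma integral_comp_isometry (f : Euc N → ℝ) : ∫ x, f (g x) = ∫ x, f x :=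
  g.measurePreserving.integral_comp g.toMeasurableEquiv.measurableEmbedding f

lemma measurePreserving_prodMap :
    MeasurePreserving (Prod.map g g) (volume : Measure (Euc N × Euc N)) volume :=
  g.measurePreserving.prod g.measurePreserving

lemma diffQuot_comp (u : Euc N → ℝ) :
    diffQuot N s (u ∘ g) = diffQuot N s u ∘ Prod.map g g := by
  ext p
  simp [diffQuot]

lemma gagInner_comp (u v : Euc N → ℝ) : gagInner N s (u ∘ g) (v ∘ g) = gagInner N s u v := by
  have h_emb := g.toMeasurableEquiv.measurableEmbedding
  simp only [gagInner_eq, diffQuot_comp]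
  exact (measurePreserving_prodMap g).integral_comp (h_emb.prodMap h_emb)
    fun p => diffQuot N s u p * diffQuot N s v p

lemma critPair_comp (u v : Euc N → ℝ) : critPair N s (u ∘ g) (v ∘ g) = critPair N s u v :=
  integral_comp_isometry g fun x => |u x| ^ (twoStar N s - 2) * u x * v x

lemma _root_.MemHs.comp [Subcritical N s] (hu : Hs N s u) : Hs N s (u ∘ g) := by
  rw [hs_iff] at *
  refine ⟨hu.1.comp g.continuous.measurable, hu.2.1.comp_measurePreserving g.measurePreserving, ?_⟩
  rw [diffQuot_comp]
  exact hu.2.2.comp_measurePreserving (measurePreserving_prodMap g)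

end Isometry

/-! ### The critical nonlinearity -/

lemma rpow_sub_one_mul_le {p ε a b : ℝ} (hp : 1 < p) (hε : 0 < ε) (ha : 0 ≤ a) (hb : 0 ≤ b) :
    a ^ (p - 1) * b ≤ ε * a ^ p + ε⁻¹ ^ (p - 1) * b ^ p := by
  have h_rpow : ∀ c : ℝ, 0 ≤ c → c ^ p = c ^ (p - 1) * c := fun c hc => by
    rw [← rpow_add_one' hc (by linarith), sub_add_cancel]
  have := hp.le
  rcases le_total b (ε * a) with hba | hab
  · calc a ^ (p - 1) * b ≤ a ^ (p - 1) * (ε * a) := by gcongr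
      _ = ε * a ^ p := by rw [h_rpow a ha]; ring
      _ ≤ ε * a ^ p + ε⁻¹ ^ (p - 1) * b ^ p := le_add_of_nonneg_right (by positivity)
  · calc a ^ (p - 1) * b ≤ (ε⁻¹ * b) ^ (p - 1) * b := by
          gcongr
          rwa [le_inv_mul_iff₀ hε]
      _ = ε⁻¹ ^ (p - 1) * b ^ p := by rw [h_rpow b hb, mul_rpow (by positivity) hb, mul_assoc]
      _ ≤ ε * a ^ p + ε⁻¹ ^ (p - 1) * b ^ p := le_add_of_nonneg_left (by positivity)

lemma abs_rpow_sub_two_mul {p : ℝ} (hp : 1 < p) (t v : ℝ) :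
    |(|t| ^ (p - 2) * t * v)| = |t| ^ (p - 1) * |v| := by
  rw [abs_mul, abs_mul, abs_of_nonneg (by positivity),
    ← rpow_add_one' (abs_nonneg t) (by linarith)]
  ring_nf

lemma abs_rpow_sub_two_mul_le {p ε : ℝ} (hp : 1 < p) (hε : 0 < ε) (t v : ℝ) :
    |(|t| ^ (p - 2) * t * v)| ≤ ε * |t| ^ p + ε⁻¹ ^ (p - 1) * |v| ^ p :=
  (abs_rpow_sub_two_mul hp t v).trans_le
    (rpow_sub_one_mul_le hp hε (abs_nonneg t) (abs_nonneg v))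

lemma integrable_rpow_sub_two_mul [Subcritical N s] (hu : Hs N s u) (hv : Hs N s v) :
    Integrable fun x => |u x| ^ (twoStar N s - 2) * u x * v x := by
  have hu_meas := hu.meas
  have hv_meas := hv.meas
  refine (hu.lp.add hv.lp).mono' (by fun_prop) (ae_of_all _ fun x => ?_)
  simpa using abs_rpow_sub_two_mul_le (one_lt_two.trans (two_lt_twoStar N s)) one_pos (u x) (v x)

lemma critPair_congr {u' v' : Euc N → ℝ} (hu : u =ᵐ[volume] u') (hv : v =ᵐ[volume] v') :
    critPair N s u v = critPair N s u' v' :=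
  integral_congr_ae <| by
    filter_upwards [hu, hv] with x hux hvx
    rw [hux, hvx]

lemma critPair_add [Subcritical N s] (hw : Hs N s w) (hu : Hs N s u) (hv : Hs N s v) :
    critPair N s w (u + v) = critPair N s w u + critPair N s w v := by
  simp only [critPair, Pi.add_apply, mul_add]
  exact integral_add (integrable_rpow_sub_two_mul hw hu) (integrable_rpow_sub_two_mul hw hv)

lemma critPair_smul (c : ℝ) (w u : Euc N → ℝ) :
    critPair N s w (c • u) = c * critPair N s w u := by
  simp only [critPair, Pi.smul_apply, smul_eq_mul, mul_left_comm _ c]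
  exact integral_const_mul _ _

lemma critPair_smul_left (c : ℝ) (w u : Euc N → ℝ) :
    critPair N s (c • w) u = |c| ^ (twoStar N s - 2) * c * critPair N s w u := by
  simp only [critPair, Pi.smul_apply, smul_eq_mul]
  rw [← integral_const_mul]
  congr 1 with x
  rw [abs_mul, mul_rpow (abs_nonneg _) (abs_nonneg _)]
  ring

lemma critPair_self [Subcritical N s] (w : Euc N → ℝ) : critPair N s w w = critInt N s w := by
  unfold critPair critInt
  congr 1 with x
  have h_split : |w x| ^ twoStar N s = |w x| ^ (twoStar N s - 2) * |w x| ^ (2 : ℝ) := by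
    rw [← rpow_add' (abs_nonneg _) (by linarith [twoStar_pos N s]), sub_add_cancel]
  rw [h_split, rpow_two, sq_abs]
  ring

lemma abs_critPair_le [Subcritical N s] (hw : Hs N s w) (hv : Hs N s v) :
    |critPair N s w v| ≤ critInt N s w ^ ((twoStar N s - 1) / twoStar N s) *
      critInt N s v ^ (twoStar N s)⁻¹ := by
  have hp : 1 < twoStar N s := one_lt_two.trans (two_lt_twoStar N s)
  set p := twoStar N s
  have hpq : (p / (p - 1)).HolderConjugate p := (HolderConjugate.conjExponent hp).symm
  have h_pow : ∀ x, (|w x| ^ (p - 1)) ^ (p / (p - 1)) = |w x| ^ p := fun x => by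
    rw [← rpow_mul (abs_nonneg _), mul_div_cancel₀ _ (by linarith)]
  have hw_meas : AEStronglyMeasurable fun x => |w x| ^ (p - 1) :=
    (hw.meas.abs.pow_const (p - 1)).aestronglyMeasurable
  have hw_memLp : MemLp (fun x => |w x| ^ (p - 1)) (ENNReal.ofReal (p / (p - 1))) := by
    rw [← integrable_abs_rpow_iff hw_meas hpq.pos]
    simpa only [abs_of_nonneg (rpow_nonneg (abs_nonneg _) _), h_pow] using hw.lp
  have h_hoelder := integral_mul_le_Lp_mul_Lq_of_nonneg hpq (μ := volume)
    (f := fun x => |w x| ^ (p - 1)) (g := fun x => |v x|)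
    (ae_of_all _ fun x => by positivity) (ae_of_all _ fun x => abs_nonneg _) hw_memLp hv.memLp.abs
  rw [one_div_div, one_div] at h_hoelder
  simp only [h_pow] at h_hoelder
  calc |critPair N s w v| ≤ ∫ x, |(|w x| ^ (p - 2) * w x * v x)| := abs_integral_le_integral_abs
    _ = ∫ x, |w x| ^ (p - 1) * |v x| := by simp only [abs_rpow_sub_two_mul hp]
    _ ≤ _ := h_hoelder

lemma tendsto_integral_max_sub {X : Type*} [MeasurableSpace X] {μ : Measure X}
    {f g : ℕ → X → ℝ} {b : X → ℝ} (hf : ∀ k, Integrable (f k) μ) (hg : ∀ k, Integrable (g k) μ)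
    (hg₀ : ∀ k x, 0 ≤ g k x) (hb : Integrable b μ) (hfb : ∀ k x, |f k x| ≤ g k x + b x)
    (hlim : ∀ᵐ x ∂μ, Tendsto (fun k => f k x) atTop (𝓝 0)) :
    Tendsto (fun k => ∫ x, max (|f k x| - g k x) 0 ∂μ) atTop (𝓝 0) := by
  have h_int : ∀ k, Integrable (fun x => max (|f k x| - g k x) 0) μ := fun k =>
    ((hf k).abs.sub (hg k)).pos_part
  have h_bound : ∀ k x, ‖max (|f k x| - g k x) 0‖ ≤ |b x| := fun k x => by
    rw [norm_of_nonneg (le_max_right _ _)]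
    exact max_le (by linarith [hfb k x, le_abs_self (b x)]) (abs_nonneg _)
  suffices h_ae : ∀ᵐ x ∂μ, Tendsto (fun k => max (|f k x| - g k x) 0) atTop (𝓝 0) by
    simpa using tendsto_integral_of_dominated_convergence _
      (fun k => (h_int k).aestronglyMeasurable) hb.abs (fun k => ae_of_all _ (h_bound k)) h_ae
  filter_upwards [hlim] with x hx
  refine squeeze_zero (fun k => le_max_right _ _) (fun k => ?_) (by simpa using hx.abs)
  exact max_le (sub_le_self _ (hg₀ k x)) (abs_nonneg _)

theorem tendsto_integral_zero_of_abs_le {X : Type*} [MeasurableSpace X] {μ : Measure X}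
    {f g : ℕ → X → ℝ} {B : ℝ} (hf : ∀ k, Integrable (f k) μ) (hg : ∀ k, Integrable (g k) μ)
    (hg₀ : ∀ k x, 0 ≤ g k x) (hB : ∀ k, ∫ x, g k x ∂μ ≤ B)
    (hfg : ∀ ε > 0, ∃ b, Integrable b μ ∧ ∀ k x, |f k x| ≤ ε * g k x + b x)
    (hlim : ∀ᵐ x ∂μ, Tendsto (fun k => f k x) atTop (𝓝 0)) :
    Tendsto (fun k => ∫ x, f k x ∂μ) atTop (𝓝 0) := by
  have hB₀ : 0 ≤ B := (integral_nonneg (hg₀ 0)).trans (hB 0)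
  rw [Metric.tendsto_nhds]
  intro δ hδ
  obtain ⟨b, hb, hfb⟩ := hfg (δ / 2 / (B + 1)) (by positivity)
  set ε := δ / 2 / (B + 1)
  have hε : 0 < ε := by positivity
  have hεB : ε * B < δ / 2 := by
    rw [div_mul_eq_mul_div, div_lt_iff₀ (by positivity)]
    nlinarith
  have h_int : ∀ k, Integrable (fun x => max (|f k x| - ε * g k x) 0) μ := fun k =>
    ((hf k).abs.sub ((hg k).const_mul ε)).pos_part
  have h_max := tendsto_integral_max_sub hf (fun k => (hg k).const_mul ε)
    (fun k x => mul_nonneg hε.le (hg₀ k x)) hb hfb hlim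
  filter_upwards [h_max.eventually_lt_const (half_pos hδ)] with k hk
  rw [dist_zero_right, norm_eq_abs]
  calc |∫ x, f k x ∂μ| ≤ ∫ x, |f k x| ∂μ := abs_integral_le_integral_abs
    _ ≤ ∫ x, (max (|f k x| - ε * g k x) 0 + ε * g k x) ∂μ :=
        integral_mono (hf k).abs ((h_int k).add ((hg k).const_mul ε)) fun x =>
          sub_le_iff_le_add.1 (le_max_left _ _)
    _ = ∫ x, max (|f k x| - ε * g k x) 0 ∂μ + ε * ∫ x, g k x ∂μ := by
        rw [integral_add (h_int k) ((hg k).const_mul ε), integral_const_mul]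
    _ ≤ ∫ x, max (|f k x| - ε * g k x) 0 ∂μ + ε * B := by
        gcongr
        exact hB k
    _ < δ := by linarith

theorem tendsto_critPair [Subcritical N s] {w : ℕ → Euc N → ℝ} {w₀ : Euc N → ℝ} {B : ℝ}
    (hw : ∀ k, Hs N s (w k)) (hw₀ : Hs N s w₀) (hv : Hs N s v) (hB : ∀ k, critInt N s (w k) ≤ B)
    (hlim : ∀ᵐ x, Tendsto (fun k => w k x) atTop (𝓝 (w₀ x))) :
    Tendsto (fun k => critPair N s (w k) v) atTop (𝓝 (critPair N s w₀ v)) := by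
  have hp := two_lt_twoStar N s
  set p := twoStar N s
  set F : (Euc N → ℝ) → Euc N → ℝ := fun u x => |u x| ^ (p - 2) * u x * v x
  have hF_int : ∀ u, Hs N s u → Integrable (F u) := fun u hu => integrable_rpow_sub_two_mul hu hv
  have h_sub : ∀ k, critPair N s (w k) v - critPair N s w₀ v = ∫ x, (F (w k) x - F w₀ x) :=
    fun k => (integral_sub (hF_int _ (hw k)) (hF_int _ hw₀)).symm
  rw [← tendsto_sub_nhds_zero_iff]
  simp only [h_sub]
  refine tendsto_integral_zero_of_abs_le (fun k => (hF_int _ (hw k)).sub (hF_int _ hw₀))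
    (fun k => (hw k).lp.add hw₀.lp)
    (fun k x => add_nonneg (by positivity) (by positivity))
    (B := B + critInt N s w₀) (fun k => ?_) (fun ε hε => ?_) ?_
  · exact (integral_add (hw k).lp hw₀.lp).trans_le (add_le_add_left (hB k) _)
  · refine ⟨_, (hv.lp.const_mul (ε⁻¹ ^ (p - 1))).const_mul 2, fun k x => ?_⟩
    have h_young := fun u : Euc N → ℝ =>
      abs_rpow_sub_two_mul_le (p := p) (by linarith) hε (u x) (v x)
    calc |F (w k) x - F w₀ x| ≤ |F (w k) x| + |F w₀ x| := abs_sub _ _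
      _ ≤ _ := add_le_add (h_young (w k)) (h_young w₀)
      _ = _ := by
        simp only [Pi.add_apply]
        ring
  · filter_upwards [hlim] with x hx
    have h_cont : Continuous fun t : ℝ => |t| ^ (p - 2) * t * v x :=
      ((continuous_abs.rpow_const fun _ => .inr (by linarith)).mul continuous_id).mul
        continuous_const
    exact tendsto_sub_nhds_zero_iff.2 ((h_cont.tendsto _).comp hx)

/-! ### Equivariant functions -/

/-- The functions of `Ḣ^s(ℝ^N)` which each isometry `g i` transforms by the sign `χ i`. -/
structure Equivariant {ι : Type*} (N : ℕ) (s : ℝ) (g : ι → Euc N ≃ₗᵢ[ℝ] Euc N) (χ : ι → ℤˣ)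
    (u : Euc N → ℝ) : Prop where
  hs : Hs N s u
  symm : ∀ i, u ∘ g i =ᵐ[volume] χ i • u

/-- Outside a ball of radius `R r` around some common fixed point `a` of the `g i`, a point has `L`
images under the `g i` whose balls of radius `r` are disjoint; here `R` depends only on `L`. -/
def LargeOrbits {ι : Type*} (g : ι → Euc N ≃ₗᵢ[ℝ] Euc N) : Prop :=
  ∀ L : ℕ, ∃ R : ℝ, ∀ x, ∃ a, (∀ i, g i a = a) ∧ ∀ r : ℝ, 0 < r →
    ‖x - a‖ ≤ R * r ∨ ∃ γ : Fin L → ι, Pairwise fun i j => 2 * r ≤ dist (g (γ i) x) (g (γ j) x)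

lemma abs_units_smul (ε : ℤˣ) (t : ℝ) : |ε • t| = |t| := by
  rcases Int.units_eq_one_or ε with rfl | rfl <;> simp

lemma units_smul_eq_smul {V : Type*} [AddCommGroup V] [Module ℝ V] (ε : ℤˣ) (v : V) :
    ε • v = ((ε : ℤ) : ℝ) • v := by
  rw [Units.smul_def, Int.cast_smul_eq_zsmul]

namespace Equivariant

variable {ι : Type*} {g : ι → Euc N ≃ₗᵢ[ℝ] Euc N} {χ : ι → ℤˣ}

lemma of_tendsto {w : ℕ → Euc N → ℝ} {w₀ : Euc N → ℝ} (hw : ∀ k, Equivariant N s g χ (w k))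
    (hw₀ : Hs N s w₀) (hlim : ∀ᵐ x, Tendsto (fun k => w k x) atTop (𝓝 (w₀ x))) :
    Equivariant N s g χ w₀ where
  hs := hw₀
  symm i := by
    have h_symm : ∀ᵐ x, ∀ k, w k (g i x) = χ i • w k x := ae_all_iff.2 fun k => (hw k).symm i
    filter_upwards [hlim, (g i).measurePreserving.quasiMeasurePreserving.ae hlim, h_symm]
      with x hx hgx hx_symm
    simp only [hx_symm] at hgx
    exact tendsto_nhds_unique hgx (hx.const_smul (χ i))

lemma setIntegral_ball_apply (hu : Equivariant N s g χ u) (i : ι) (x : Euc N) (r : ℝ) :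
    ∫ y in Metric.ball (g i x) r, |u y| ^ twoStar N s =
      ∫ y in Metric.ball x r, |u y| ^ twoStar N s := by
  have h_preimage : g i ⁻¹' Metric.ball (g i x) r = Metric.ball x r := by
    ext y
    simp
  rw [← (g i).measurePreserving.setIntegral_preimage_emb
    (g i).toMeasurableEquiv.measurableEmbedding, h_preimage]
  refine integral_congr_ae (ae_restrict_of_ae ?_)
  filter_upwards [hu.symm i] with y hy
  rw [← Function.comp_apply (f := u), hy, Pi.smul_apply, abs_units_smul]

variable [Subcritical N s]

lemma add (hu : Equivariant N s g χ u) (hv : Equivariant N s g χ v) :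
    Equivariant N s g χ (u + v) where
  hs := hu.hs.add hv.hs
  symm i := by
    rw [smul_add]
    exact (hu.symm i).add (hv.symm i)

lemma smul (hu : Equivariant N s g χ u) (c : ℝ) : Equivariant N s g χ (c • u) where
  hs := hu.hs.smul c
  symm i := by
    rw [smul_comm]
    exact (hu.symm i).const_smul c

lemma sub (hu : Equivariant N s g χ u) (hv : Equivariant N s g χ v) :
    Equivariant N s g χ (u - v) where
  hs := hu.hs.sub hv.hs
  symm i := by
    rw [smul_sub]
    exact (hu.symm i).sub (hv.symm i)

lemma dil (hu : Equivariant N s g χ u) {a : Euc N} (ha : ∀ i, g i a = a) {r : ℝ} (hr : 0 < r) :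
    Equivariant N s g χ (dil s a r u) where
  hs := hu.hs.dil a hr
  symm i := by
    have h_comp : FracSobolev.dil s a r u ∘ g i = FracSobolev.dil s a r (u ∘ g i) := by
      ext x
      simp [FracSobolev.dil, ha i]
    have h_smul : χ i • FracSobolev.dil s a r u = FracSobolev.dil s a r (χ i • u) := by
      ext x
      exact (mul_smul_comm (χ i) _ _).symm
    rw [h_comp, h_smul]
    exact dil_congr (hu.symm i) a hr

lemma mul_scaledAvg_rpow_le (hu : Equivariant N s g χ u) {x : Euc N} {r : ℝ} (hr : 0 < r) {L : ℕ}
    {γ : Fin L → ι} (hγ : Pairwise fun i j => 2 * r ≤ dist (g (γ i) x) (g (γ j) x)) :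
    L * (ballVol N * scaledAvg s u x r ^ twoStar N s) ≤ critInt N s u := by
  have h_disj : Pairwise (Function.onFun Disjoint fun i => Metric.ball (g (γ i) x) r) :=
    fun i j hij => Metric.ball_disjoint_ball (by linarith [hγ hij])
  calc L * (ballVol N * scaledAvg s u x r ^ twoStar N s)
      ≤ L * ∫ y in Metric.ball x r, |u y| ^ twoStar N s := by
        gcongr
        exact ballVol_mul_scaledAvg_rpow_le hu.hs x hr
    _ = ∑ i : Fin L, ∫ y in Metric.ball (g (γ i) x) r, |u y| ^ twoStar N s := by
        simp [hu.setIntegral_ball_apply]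
    _ = ∫ y in ⋃ i, Metric.ball (g (γ i) x) r, |u y| ^ twoStar N s :=
        (integral_iUnion_fintype (fun _ => measurableSet_ball) h_disj
          fun _ => hu.hs.lp.integrableOn).symm
    _ ≤ critInt N s u := setIntegral_le_integral hu.hs.lp (ae_of_all _ fun y => by positivity)

end Equivariant

lemma exists_lt_scaledAvg (N : ℕ) (s : ℝ) [Subcritical N s] {δ : ℝ} (hδ : 0 < δ) :
    ∃ M, 0 < M ∧ ∀ u, Hs N s u → gagSq N s u = 1 → δ ≤ critInt N s u →
      ∃ x r, 0 < r ∧ M < scaledAvg s u x r := by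
  have hω := ballVol_pos (N := N)
  have hp := two_lt_twoStar N s
  refine ⟨(δ * ballVol N / 8) ^ (1 / (twoStar N s - 2)) / 2, by positivity,
    fun u hu h_norm h_crit => ?_⟩
  by_contra! h_le
  have h_improved := critInt_le_of_scaledAvg_le hu (by positivity) h_le
  rw [mul_div_cancel₀ _ two_ne_zero, ← rpow_mul (by positivity),
    one_div_mul_cancel (by linarith), rpow_one, h_norm] at h_improved
  field_simp at h_improved
  linarith

lemma mul_ballAvg_sq_le [Subcritical N s] (hu : Hs N s u) {y : Euc N} {R : ℝ} (hy : ‖y‖ ≤ R) :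
    (1 + (R + 1)) ^ (-((N : ℝ) + 1)) * (ballVol N * ballAvg u y 1 ^ 2) ≤
      ∫ x, weight N x * u x ^ 2 := by
  have hω := ballVol_pos (N := N)
  have hR := (norm_nonneg y).trans hy
  set c := (1 + (R + 1)) ^ (-((N : ℝ) + 1))
  have hc : 0 < c := by positivity
  have h_int := integrable_weight_mul_sq hu
  have h_weight : ∀ x ∈ Metric.ball y 1, c * u x ^ 2 ≤ weight N x * u x ^ 2 := fun x hx => by
    gcongr
    refine le_weight_of_norm_le ?_
    linarith [norm_le_norm_add_norm_sub' x y, mem_ball_iff_norm.1 hx]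
  have h_sq : IntegrableOn (fun x => u x ^ 2) (Metric.ball y 1) := by
    refine (h_int.const_mul c⁻¹).integrableOn.mono' (hu.meas.pow_const 2).aestronglyMeasurable ?_
    filter_upwards [ae_restrict_mem measurableSet_ball] with x hx
    rw [norm_of_nonneg (sq_nonneg _), le_inv_mul_iff₀ hc]
    exact h_weight x hx
  have h_jensen : ballAvg u y 1 ^ 2 ≤ ⨍ x in Metric.ball y 1, u x ^ 2 := by
    simpa [ballAvg] using sq_sub_setAverage_le 0 (Metric.measure_ball_pos volume y one_pos).ne'
      measure_ball_lt_top.ne (hu.integrableOn_ball y 1) (by simpa using h_sq)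
  rw [setAverage_eq, volume_real_ball y one_pos, one_pow, one_mul, smul_eq_mul,
    le_inv_mul_iff₀ hω] at h_jensen
  calc c * (ballVol N * ballAvg u y 1 ^ 2) ≤ c * ∫ x in Metric.ball y 1, u x ^ 2 := by gcongr
    _ = ∫ x in Metric.ball y 1, c * u x ^ 2 := (integral_const_mul _ _).symm
    _ ≤ ∫ x in Metric.ball y 1, weight N x * u x ^ 2 :=
        setIntegral_mono_on (h_sq.const_mul c) h_int.integrableOn measurableSet_ball h_weight
    _ ≤ ∫ x, weight N x * u x ^ 2 := setIntegral_le_integral h_int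
        (ae_of_all _ fun x => mul_nonneg (weight_pos x).le (sq_nonneg _))

/-- A function which is large on a ball of radius `r` is large on all the disjoint balls of its
orbit, and there is a bounded number of them. Hence the ball is at distance `O(r)` from a common
fixed point `a`, and the dilation of centre `a` and ratio `r` brings it to the origin. -/
theorem exists_rescaling {ι : Type*} {g : ι → Euc N ≃ₗᵢ[ℝ] Euc N} {χ : ι → ℤˣ} [Subcritical N s]
    (hg : LargeOrbits g) {δ : ℝ} (hδ : 0 < δ) :
    ∃ c > 0, ∀ u, Equivariant N s g χ u → gagSq N s u = 1 → δ ≤ critInt N s u →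
      ∃ w, Equivariant N s g χ w ∧ gagSq N s w = 1 ∧ critInt N s w = critInt N s u ∧
        c ≤ ∫ x, weight N x * w x ^ 2 := by
  have hω := ballVol_pos (N := N)
  obtain ⟨C, -, hC⟩ := exists_sobolev N s
  obtain ⟨M, hM, h_large⟩ := exists_lt_scaledAvg N s hδ
  obtain ⟨L, hL⟩ := exists_nat_gt (C / (ballVol N * M ^ twoStar N s))
  rw [div_lt_iff₀ (by positivity)] at hL
  obtain ⟨R, hR⟩ := hg L
  refine ⟨(1 + (|R| + 1)) ^ (-((N : ℝ) + 1)) * (ballVol N * M ^ 2), by positivity,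
    fun u hu h_norm h_crit => ?_⟩
  obtain ⟨x, r, hr, hM_lt⟩ := h_large u hu.hs h_norm h_crit
  obtain ⟨a, ha, hax⟩ := hR x
  have h_near : ‖x - a‖ ≤ R * r := by
    refine (hax r hr).resolve_right ?_
    rintro ⟨γ, hγ⟩
    have h_sobolev := hC u hu.hs
    rw [h_norm, one_rpow, mul_one] at h_sobolev
    have : L * (ballVol N * M ^ twoStar N s) ≤
        L * (ballVol N * scaledAvg s u x r ^ twoStar N s) := by
      have := twoStar_pos N s
      gcongr
    linarith [hu.mul_scaledAvg_rpow_le hr hγ]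
  have hw := hu.dil ha hr
  refine ⟨_, hw, (gagSq_dil hr u).trans h_norm, critInt_dil hr u,
    le_trans ?_ (mul_ballAvg_sq_le hw.hs (y := r⁻¹ • (x - a)) (R := |R|) ?_)⟩
  · rw [← sq_abs (ballAvg _ _ _), ← scaledAvg_eq_abs_ballAvg_dil hr, smul_inv_smul₀ hr.ne',
      add_sub_cancel]
    gcongr
  · rw [norm_smul, norm_inv, norm_of_nonneg hr.le, inv_mul_le_iff₀ hr, mul_comm]
    exact h_near.trans (by gcongr; exact le_abs_self R)

/-! ### Equivariant solutions -/

lemma gagInner_units_smul_left (ε : ℤˣ) (u v : Euc N → ℝ) :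
    gagInner N s (ε • u) v = ε • gagInner N s u v := by
  rw [units_smul_eq_smul, units_smul_eq_smul, gagInner_smul_left, smul_eq_mul]

lemma critPair_units_smul_left (ε : ℤˣ) (u v : Euc N → ℝ) :
    critPair N s (ε • u) v = ε • critPair N s u v := by
  rcases Int.units_eq_one_or ε with rfl | rfl
  · simp
  · simp [critPair, integral_neg]

lemma gagSq_normalize (hu : 0 < gagSq N s u) : gagSq N s ((√(gagSq N s u))⁻¹ • u) = 1 := by
  rw [gagSq_smul, inv_pow, sq_sqrt hu.le, inv_mul_cancel₀ hu.ne']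

lemma critInt_normalize (hu : 0 < gagSq N s u) :
    critInt N s ((√(gagSq N s u))⁻¹ • u) = critInt N s u / gagSq N s u ^ (twoStar N s / 2) := by
  rw [critInt_smul, abs_of_nonneg (by positivity), sqrt_eq_rpow, ← rpow_neg hu.le,
    ← rpow_mul hu.le, div_eq_inv_mul (critInt N s u), ← rpow_neg hu.le]
  ring_nf

lemma gagSq_pos_of_critInt_pos [Subcritical N s] (hu : Hs N s u) (h0 : 0 < critInt N s u) :
    0 < gagSq N s u :=
  (gagSq_nonneg u).lt_of_ne' fun h => h0.ne' (critInt_eq_zero_of_gagSq_eq_zero hu h)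

lemma eq_zero_of_forall_mul_le {d K : ℝ} (H : ∀ t, t * d ≤ K * t ^ 2) : d = 0 := by
  have h_discrim : discrim K (-d) 0 ≤ 0 := discrim_le_zero fun t => by linarith [H t]
  simpa [discrim, sq_nonpos_iff] using h_discrim

section

variable {ι : Type*} {g : ι → Euc N ≃ₗᵢ[ℝ] Euc N} {χ : ι → ℤˣ} {S : ℝ}

/-- The critical integral is at most `S` on equivariant functions of unit Gagliardo seminorm, in
homogeneous form. -/
def SobolevBound (N : ℕ) (s : ℝ) (g : ι → Euc N ≃ₗᵢ[ℝ] Euc N) (χ : ι → ℤˣ) (S : ℝ) : Prop :=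
  ∀ u, Equivariant N s g χ u → critInt N s u ≤ S * gagSq N s u ^ (twoStar N s / 2)

lemma SobolevBound.critInt_le (hS : SobolevBound N s g χ S) (hu : Equivariant N s g χ u)
    (h_norm : gagSq N s u = 1) : critInt N s u ≤ S := by
  simpa only [h_norm, one_rpow, mul_one] using hS u hu

variable [Subcritical N s]

theorem exists_maximizing_seq (hne : ∃ u, Equivariant N s g χ u ∧ 0 < critInt N s u) :
    ∃ S > 0, SobolevBound N s g χ S ∧ ∃ u : ℕ → Euc N → ℝ, (∀ k, Equivariant N s g χ (u k)) ∧
      (∀ k, gagSq N s (u k) = 1) ∧ Tendsto (fun k => critInt N s (u k)) atTop (𝓝 S) := by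
  obtain ⟨C, -, hC⟩ := exists_sobolev N s
  set A : Set ℝ := {t | ∃ u, Equivariant N s g χ u ∧ gagSq N s u = 1 ∧ critInt N s u = t}
  have h_bdd : BddAbove A := by
    refine ⟨C, ?_⟩
    rintro t ⟨u, hu, h_norm, rfl⟩
    simpa only [h_norm, one_rpow, mul_one] using hC u hu.hs
  have h_mem : ∀ u, Equivariant N s g χ u → 0 < gagSq N s u →
      critInt N s u / gagSq N s u ^ (twoStar N s / 2) ∈ A := fun u hu h_pos =>
    ⟨_, hu.smul _, gagSq_normalize h_pos, critInt_normalize h_pos⟩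
  obtain ⟨u₀, hu₀, hu₀_pos⟩ := hne
  have h₀ := gagSq_pos_of_critInt_pos hu₀.hs hu₀_pos
  have hS : 0 < sSup A := (by positivity : (0 : ℝ) < _).trans_le (le_csSup h_bdd (h_mem u₀ hu₀ h₀))
  refine ⟨sSup A, hS, fun u hu => ?_, ?_⟩
  · have h_nonneg := gagSq_nonneg (s := s) u
    rcases (critInt_nonneg (s := s) u).eq_or_lt with h_zero | h_pos
    · rw [← h_zero]
      positivity
    · have hu_pos := gagSq_pos_of_critInt_pos hu.hs h_pos
      rw [← div_le_iff₀ (by positivity)]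
      exact le_csSup h_bdd (h_mem u hu hu_pos)
  · obtain ⟨t, -, ht, htA⟩ := exists_seq_tendsto_sSup ⟨_, h_mem u₀ hu₀ h₀⟩ h_bdd
    choose u hu h_norm h_crit using htA
    exact ⟨u, hu, h_norm, by simpa only [h_crit] using ht⟩

lemma SobolevBound.critPair_le (hS : SobolevBound N s g χ S) (hS₀ : 0 < S)
    (hw : Equivariant N s g χ w) (h_norm : gagSq N s w = 1) (hv : Equivariant N s g χ v) :
    critPair N s w v ≤ S * ((1 + gagSq N s v) / 2) := by
  have hp := two_lt_twoStar N s
  have h_gag := gagSq_nonneg (s := s) v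
  have hw_crit := critInt_nonneg (s := s) w
  have hv_crit := critInt_nonneg (s := s) v
  have hwS := hS.critInt_le hw h_norm
  have hvS := hS v hv
  set p := twoStar N s
  have h_exp : 0 ≤ (p - 1) / p := div_nonneg (by linarith) (by linarith)
  calc critPair N s w v ≤ critInt N s w ^ ((p - 1) / p) * critInt N s v ^ p⁻¹ :=
        (le_abs_self _).trans (abs_critPair_le hw.hs hv.hs)
    _ ≤ S ^ ((p - 1) / p) * (S * gagSq N s v ^ (p / 2)) ^ p⁻¹ := by gcongr
    _ = S ^ ((p - 1) / p + p⁻¹) * √(gagSq N s v) := by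
        rw [mul_rpow hS₀.le (by positivity), ← rpow_mul h_gag, sqrt_eq_rpow, rpow_add hS₀]
        field_simp
    _ = S * √(gagSq N s v) := by
        rw [← one_div, ← add_div, sub_add_cancel, div_self (by linarith), rpow_one]
    _ ≤ S * ((1 + gagSq N s v) / 2) := by
        gcongr
        nlinarith [sq_sqrt h_gag, sq_nonneg (√(gagSq N s v) - 1)]

lemma Equivariant.exists_weak_limit {w : ℕ → Euc N → ℝ} (hw : ∀ k, Equivariant N s g χ (w k))
    {R c : ℝ} (hR : ∀ k, gagSq N s (w k) ≤ R) (hc : 0 < c)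
    (hwc : ∀ k, c ≤ ∫ x, weight N x * w k x ^ 2) :
    ∃ (w₀ : Euc N → ℝ) (φ : ℕ → ℕ), Equivariant N s g χ w₀ ∧ 0 < critInt N s w₀ ∧ StrictMono φ ∧
      (∀ v, Hs N s v → Tendsto (fun k => gagInner N s (w (φ k)) v) atTop (𝓝 (gagInner N s w₀ v))) ∧
      ∀ᵐ x, Tendsto (fun k => w (φ k) x) atTop (𝓝 (w₀ x)) := by
  obtain ⟨w₀, φ, hw₀, hφ, h_weak, h_weight, h_ae⟩ := exists_weak_limit_ae (fun k => (hw k).hs) hR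
  refine ⟨w₀, φ, .of_tendsto (fun k => hw (φ k)) hw₀ h_ae, ?_, hφ, h_weak, h_ae⟩
  refine (critInt_nonneg w₀).lt_of_ne' fun h0 => hc.not_ge ?_
  refine ge_of_tendsto' h_weight fun k => (hwc (φ k)).trans_eq (integral_congr_ae ?_)
  filter_upwards [ae_eq_zero_of_critInt_eq_zero hw₀ h0] with x hx
  simp [hx]

/-- The Euler–Lagrange equation of a maximizing sequence passes to the weak limit, whether or not
the limit is itself a maximizer. -/
lemma SobolevBound.critPair_eq_of_tendsto (hS : SobolevBound N s g χ S) (hS₀ : 0 < S)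
    {w : ℕ → Euc N → ℝ} {w₀ : Euc N → ℝ} (hw : ∀ k, Equivariant N s g χ (w k))
    (h_norm : ∀ k, gagSq N s (w k) = 1) (h_crit : Tendsto (fun k => critInt N s (w k)) atTop (𝓝 S))
    (hw₀ : Hs N s w₀) (hv : Equivariant N s g χ v)
    (h_weak : Tendsto (fun k => gagInner N s (w k) v) atTop (𝓝 (gagInner N s w₀ v)))
    (h_ae : ∀ᵐ x, Tendsto (fun k => w k x) atTop (𝓝 (w₀ x))) :
    critPair N s w₀ v = S * gagInner N s w₀ v := by
  have h_pair := tendsto_critPair (fun k => (hw k).hs) hw₀ hv.hs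
    (fun k => hS.critInt_le (hw k) (h_norm k)) h_ae
  have h_var : ∀ (t : ℝ) (k : ℕ), critInt N s (w k) + t * critPair N s (w k) v ≤
      S * (1 + t * gagInner N s (w k) v + t ^ 2 * gagSq N s v / 2) := fun t k => by
    have hwk := (hw k).hs
    have htv := hv.hs.smul t
    have h_le := hS.critPair_le hS₀ (hw k) (h_norm k) ((hw k).add (hv.smul t))
    rw [critPair_add hwk hwk htv, critPair_self, critPair_smul, gagSq_add hwk htv,
      gagInner_smul_right, gagSq_smul, h_norm] at h_le
    linarith
  refine sub_eq_zero.1 (eq_zero_of_forall_mul_le (K := S * gagSq N s v / 2) fun t => ?_)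
  have h_lim := le_of_tendsto_of_tendsto' (h_crit.add (h_pair.const_mul t))
    ((((h_weak.const_mul t).const_add 1).add_const _).const_mul S) (h_var t)
  linarith

theorem exists_equivariant_critical (hg : LargeOrbits g)
    (hne : ∃ u, Equivariant N s g χ u ∧ 0 < critInt N s u) :
    ∃ S > 0, ∃ w, Equivariant N s g χ w ∧ 0 < critInt N s w ∧
      ∀ v, Equivariant N s g χ v → critPair N s w v = S * gagInner N s w v := by
  obtain ⟨S, hS₀, hS, u, hu, hu_norm, hu_crit⟩ := exists_maximizing_seq hne
  obtain ⟨c, hc, h_rescale⟩ := exists_rescaling (χ := χ) (s := s) hg (half_pos hS₀)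
  obtain ⟨k₀, hk₀⟩ := eventually_atTop.1 (hu_crit.eventually_const_le (half_lt_self hS₀))
  choose w hw hw_norm hw_crit hw_weight using fun k =>
    h_rescale (u (k + k₀)) (hu _) (hu_norm _) (hk₀ _ (Nat.le_add_left _ _))
  have h_max : Tendsto (fun k => critInt N s (w k)) atTop (𝓝 S) := by
    simp only [hw_crit]
    exact (tendsto_add_atTop_iff_nat k₀).2 hu_crit
  obtain ⟨w₀, φ, hw₀, hw₀_pos, hφ, h_weak, h_ae⟩ :=
    Equivariant.exists_weak_limit hw (fun k => (hw_norm k).le) hc hw_weight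
  exact ⟨S, hS₀, w₀, hw₀, hw₀_pos, fun v hv =>
    hS.critPair_eq_of_tendsto hS₀ (fun k => hw (φ k)) (fun k => hw_norm _)
      (h_max.comp hφ.tendsto_atTop) hw₀.hs hv (h_weak v hv.hs) h_ae⟩

lemma _root_.MemHs.exists_gagInner_eq_critPair (hw : Hs N s w) :
    ∃ f, Hs N s f ∧ ∀ v, Hs N s v → critPair N s w v = gagInner N s f v := by
  obtain ⟨C, -, hC⟩ := exists_sobolev_norm N s
  let ℓ : hsFun N s →ₗ[ℝ] ℝ :=
    { toFun := fun v => critPair N s w v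
      map_add' := fun u v => critPair_add hw (hs_coe u) (hs_coe v)
      map_smul' := fun c v => critPair_smul c w v }
  obtain ⟨f, hf, hℓ⟩ := exists_gagInner_eq ℓ
    (K := critInt N s w ^ ((twoStar N s - 1) / twoStar N s) * C) fun v => by
      have := critInt_nonneg (s := s) w
      rw [mul_assoc]
      refine (abs_critPair_le hw (hs_coe v)).trans ?_
      gcongr
      exact hC v (hs_coe v)
  exact ⟨f, hf, fun v hv => hℓ ⟨v, hv⟩⟩

lemma Equivariant.of_gagInner_eq_critPair (hw : Equivariant N s g χ w) {f : Euc N → ℝ}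
    (hf : Hs N s f) (hfw : ∀ v, Hs N s v → critPair N s w v = gagInner N s f v) :
    Equivariant N s g χ f where
  hs := hf
  symm i := by
    have h_comp : ∀ v, Hs N s v → gagInner N s (f ∘ g i) v = critPair N s (w ∘ g i) v :=
      fun v hv => by
        have hv_comp : v = (v ∘ (g i).symm) ∘ g i := by
          ext x
          simp
        rw [hv_comp, gagInner_comp, critPair_comp, hfw _ (hv.comp _)]
    have hχf : Hs N s (χ i • f) := by
      rw [units_smul_eq_smul]
      exact hf.smul _
    have h_diff := (hf.comp (g i)).sub hχf
    refine ae_eq_of_gagInner_eq (hf.comp (g i)) hχf ?_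
    rw [h_comp _ h_diff, critPair_congr (hw.symm i) (ae_eq_refl _), critPair_units_smul_left,
      gagInner_units_smul_left, hfw _ h_diff]

/-- Symmetric criticality: the Riesz representative of `critPair N s w` is itself equivariant, so
it is determined by its pairings with equivariant functions. -/
theorem Equivariant.critPair_eq (hw : Equivariant N s g χ w)
    (h_crit : ∀ v, Equivariant N s g χ v → critPair N s w v = S * gagInner N s w v)
    (hv : Hs N s v) : critPair N s w v = S * gagInner N s w v := by
  obtain ⟨f, hf, hfw⟩ := hw.hs.exists_gagInner_eq_critPair
  have hf_equiv := hw.of_gagInner_eq_critPair hf hfw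
  have h_diff := hf_equiv.sub (hw.smul S)
  have hf_eq : f =ᵐ[volume] S • w := ae_eq_of_gagInner_eq hf (hw.hs.smul S) <| by
    rw [← hfw _ h_diff.hs, h_crit _ h_diff, gagInner_smul_left]
  rw [hfw v hv, gagInner_congr hf_eq (ae_eq_refl v), gagInner_smul_left]

theorem exists_equivariant_solution (hg : LargeOrbits g)
    (hne : ∃ u, Equivariant N s g χ u ∧ 0 < critInt N s u) :
    ∃ w, Equivariant N s g χ w ∧ 0 < critInt N s w ∧
      ∀ v, Hs N s v → pairing N s Set.univ w v = 0 := by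
  obtain ⟨S, hS, w, hw, hw_pos, h_crit⟩ := exists_equivariant_critical hg hne
  have hp : twoStar N s - 2 ≠ 0 := by linarith [two_lt_twoStar N s]
  set c := S ^ (-(twoStar N s - 2)⁻¹) with hc
  have hc₀ : 0 < c := by positivity
  have h_scale : c ^ (twoStar N s - 2) * S = 1 := by
    rw [hc, ← rpow_mul hS.le, neg_mul, inv_mul_cancel₀ hp, rpow_neg_one, inv_mul_cancel₀ hS.ne']
  refine ⟨c • w, hw.smul c, ?_, fun v hv => ?_⟩
  · rw [critInt_smul, abs_of_pos hc₀]
    positivity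
  · rw [pairing_univ_eq, critPair_smul_left, hw.critPair_eq h_crit hv, gagInner_smul_left,
      abs_of_pos hc₀]
    linear_combination -c * gagInner N s w v * h_scale

end

/-! ### Test functions -/

/-- A kernel which dominates the Gagliardo integrand of bounded Lipschitz functions. -/
def gagKernel (N : ℕ) (s : ℝ) (z : Euc N) : ℝ := min (‖z‖ ^ 2) 1 / ‖z‖ ^ ((N : ℝ) + 2 * s)

lemma gagKernel_nonneg (z : Euc N) : 0 ≤ gagKernel N s z := by
  unfold gagKernel
  positivity

lemma gagKernel_neg (z : Euc N) : gagKernel N s (-z) = gagKernel N s z := by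
  simp only [gagKernel, norm_neg]

lemma integrable_gagKernel [Subcritical N s] (hs : s < 1) : Integrable (gagKernel N s) := by
  have hN := dim_pos N s
  have hs₀ := Subcritical.pos N (s := s)
  have : Nonempty (Fin N) := ⟨⟨0, hN⟩⟩
  unfold gagKernel
  rw [integrable_fun_norm_addHaar volume (f := fun r : ℝ => min (r ^ 2) 1 / r ^ ((N : ℝ) + 2 * s)),
    ← Set.Ioc_union_Ioi_eq_Ioi zero_le_one]
  have h_jacobian : ∀ r : ℝ, r ^ (N - 1) = r ^ ((N : ℝ) - 1) := fun r => by
    rw [← rpow_natCast, Nat.cast_sub hN, Nat.cast_one]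
  simp only [finrank_euclideanSpace_fin, smul_eq_mul, h_jacobian]
  refine IntegrableOn.union ?_ ?_
  · have h_near : IntegrableOn (fun r : ℝ => r ^ (1 - 2 * s)) (Set.Ioc 0 1) :=
      (intervalIntegral.intervalIntegrable_rpow' (by linarith)).1
    refine h_near.congr_fun (fun r hr => ?_) measurableSet_Ioc
    rw [min_eq_left (pow_le_one₀ hr.1.le hr.2), ← rpow_two, ← rpow_sub hr.1, ← rpow_add hr.1]
    ring_nf
  · have h_far : IntegrableOn (fun r : ℝ => r ^ (-1 - 2 * s)) (Set.Ioi 1) :=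
      integrableOn_Ioi_rpow_of_lt (by linarith) one_pos
    refine h_far.congr_fun (fun r (hr : 1 < r) => ?_) measurableSet_Ioi
    have hr₀ : 0 < r := one_pos.trans hr
    rw [min_eq_right (one_le_pow₀ hr.le), one_div, ← rpow_neg hr₀.le, ← rpow_add hr₀]
    ring_nf

lemma sq_sub_le_mul_min_of_lipschitz {X : Type*} [PseudoMetricSpace X] {f : X → ℝ} {C : NNReal}
    (hf : LipschitzWith C f) {M : ℝ} (hM : ∀ x, |f x| ≤ M) (x y : X) :
    (f x - f y) ^ 2 ≤ ((C : ℝ) ^ 2 + (2 * M) ^ 2) * min (dist x y ^ 2) 1 := by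
  have h_lip : |f x - f y| ≤ C * dist x y := hf.dist_le_mul x y
  have h_bdd : |f x - f y| ≤ 2 * M := (abs_sub _ _).trans (by linarith [hM x, hM y])
  rw [mul_min_of_nonneg _ _ (by positivity), ← sq_abs]
  refine le_min ?_ ?_
  · calc |f x - f y| ^ 2 ≤ (C * dist x y) ^ 2 := by gcongr
      _ = C ^ 2 * dist x y ^ 2 := mul_pow _ _ _
      _ ≤ (C ^ 2 + (2 * M) ^ 2) * dist x y ^ 2 := by
        gcongr
        linarith [sq_nonneg (2 * M)]
  · calc |f x - f y| ^ 2 ≤ (2 * M) ^ 2 := by gcongr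
      _ ≤ ((C : ℝ) ^ 2 + (2 * M) ^ 2) * 1 := by linarith [sq_nonneg (C : ℝ)]

lemma integrable_indicator_mul_gagKernel [Subcritical N s] (hs : s < 1) {B : Set (Euc N)}
    (hB : MeasurableSet B) (hB_fin : volume B ≠ ⊤) :
    Integrable fun p : Euc N × Euc N => B.indicator 1 p.2 * gagKernel N s (p.1 - p.2) := by
  have h_indicator : Integrable (B.indicator (1 : Euc N → ℝ)) :=
    (integrable_indicator_iff hB).2 (integrableOn_const hB_fin)
  exact h_indicator.convolution_integrand (ContinuousLinearMap.mul ℝ ℝ) (integrable_gagKernel hs)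

lemma sq_sub_div_le_of_lipschitz {C : NNReal} (hu : LipschitzWith C u) {M : ℝ}
    (hM : ∀ x, |u x| ≤ M) {B : Set (Euc N)} (hB : ∀ x, u x ≠ 0 → x ∈ B) (x y : Euc N) :
    (u x - u y) ^ 2 / dist x y ^ ((N : ℝ) + 2 * s) ≤ ((C : ℝ) ^ 2 + (2 * M) ^ 2) *
      (B.indicator 1 y * gagKernel N s (x - y) + B.indicator 1 x * gagKernel N s (y - x)) := by
  have h_nonneg : ∀ z, 0 ≤ B.indicator (1 : Euc N → ℝ) z := fun z =>
    Set.indicator_nonneg (fun _ _ => zero_le_one) z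
  have h_one : ∀ z, u z ≠ 0 → B.indicator (1 : Euc N → ℝ) z = 1 := fun z hz =>
    Set.indicator_of_mem (hB z hz) _
  have hx := h_nonneg x
  have hy := h_nonneg y
  have hk := gagKernel_nonneg (s := s) (x - y)
  rw [← gagKernel_neg (y - x), neg_sub, ← add_mul]
  rcases eq_or_ne (u x - u y) 0 with h0 | h0
  · rw [h0, zero_pow two_ne_zero, zero_div]
    positivity
  have h_cover : 1 ≤ B.indicator (1 : Euc N → ℝ) y + B.indicator 1 x := by
    rcases eq_or_ne (u x) 0 with hux | hux
    · have huy : u y ≠ 0 := fun huy => h0 (by rw [hux, huy, sub_self])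
      linarith [h_one y huy]
    · linarith [h_one x hux]
  calc (u x - u y) ^ 2 / dist x y ^ ((N : ℝ) + 2 * s)
      ≤ ((C : ℝ) ^ 2 + (2 * M) ^ 2) * gagKernel N s (x - y) := by
        rw [gagKernel, ← dist_eq_norm, ← mul_div_assoc]
        gcongr
        exact sq_sub_le_mul_min_of_lipschitz hu hM x y
    _ ≤ ((C : ℝ) ^ 2 + (2 * M) ^ 2) *
        ((B.indicator 1 y + B.indicator 1 x) * gagKernel N s (x - y)) := by
        gcongr
        exact le_mul_of_one_le_left hk h_cover

lemma gagFinite_of_lipschitz [Subcritical N s] (hs : s < 1) {C : NNReal} (hu : LipschitzWith C u)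
    (hsupp : HasCompactSupport u) : GagFinite N s u := by
  obtain ⟨M, hM⟩ := hu.continuous.bounded_above_of_compact_support hsupp
  have h_int := integrable_indicator_mul_gagKernel hs (isClosed_tsupport u).measurableSet
    hsupp.isCompact.measure_lt_top.ne
  have h_meas : Measurable fun p : Euc N × Euc N =>
      (u p.1 - u p.2) ^ 2 / dist p.1 p.2 ^ ((N : ℝ) + 2 * s) := by
    have := hu.continuous.measurable
    fun_prop
  refine ((h_int.add h_int.swap).const_mul ((C : ℝ) ^ 2 + (2 * M) ^ 2)).mono'
    h_meas.aestronglyMeasurable (ae_of_all _ fun p => ?_)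
  rw [norm_of_nonneg (by positivity)]
  exact sq_sub_div_le_of_lipschitz hu hM (fun x hx => subset_tsupport u hx) p.1 p.2

lemma hs_of_contDiff [Subcritical N s] (hs : s < 1) (hu : ContDiff ℝ 1 u)
    (hsupp : HasCompactSupport u) : Hs N s u where
  meas := hu.continuous.measurable
  lp := by
    have hp := twoStar_pos N s
    exact (hu.continuous.abs.rpow_const fun _ => .inr hp.le).integrable_of_hasCompactSupport
      (hsupp.comp_left (g := fun t : ℝ => |t| ^ twoStar N s) (by simp [zero_rpow hp.ne']))
  fin := by
    obtain ⟨C, hC⟩ := hu.lipschitzWith_of_hasCompactSupport hsupp one_ne_zero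
    exact gagFinite_of_lipschitz hs hC hsupp
  vanish := by simp

/-! ### Sign changes -/

lemma ae_nonpos_of_volume_pos_eq_zero (h : volume {x | 0 < u x} = 0) : ∀ᵐ x, u x ≤ 0 := by
  simpa only [ae_iff, not_le] using h

section Odd

variable {g : Euc N ≃ₗᵢ[ℝ] Euc N}

lemma volume_pos_set_of_comp_eq_neg (hg : u ∘ g =ᵐ[volume] -u) (hu : ¬u =ᵐ[volume] 0) :
    0 < volume {x | 0 < u x} := by
  refine pos_iff_ne_zero.2 fun h_null => hu ?_
  have h_nonpos := ae_nonpos_of_volume_pos_eq_zero h_null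
  filter_upwards [hg, h_nonpos, g.measurePreserving.quasiMeasurePreserving.ae h_nonpos]
    with x hx hux hugx
  simp only [Function.comp_apply, Pi.neg_apply, Pi.zero_apply] at hx ⊢
  linarith

lemma volume_neg_set_of_comp_eq_neg (hg : u ∘ g =ᵐ[volume] -u) (hu : ¬u =ᵐ[volume] 0) :
    0 < volume {x | u x < 0} := by
  have hg_neg : (-u) ∘ g =ᵐ[volume] -(-u) := hg.neg
  have hu_neg : ¬-u =ᵐ[volume] 0 := fun h => hu (by simpa using h.neg)
  simpa using volume_pos_set_of_comp_eq_neg hg_neg hu_neg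

lemma not_radial_of_comp_eq_neg (hg : u ∘ g =ᵐ[volume] -u) (hu : ¬u =ᵐ[volume] 0) :
    ¬∃ f : ℝ → ℝ, ∀ᵐ x, u x = f ‖x‖ := by
  rintro ⟨f, hf⟩
  refine hu ?_
  filter_upwards [hg, hf, g.measurePreserving.quasiMeasurePreserving.ae hf] with x hx hux hugx
  simp only [g.norm_map, ← hux] at hugx
  simp only [Function.comp_apply, Pi.neg_apply, Pi.zero_apply] at hx ⊢
  linarith

end Odd

lemma not_ae_eq_zero_of_critInt_pos [Subcritical N s] (hu : 0 < critInt N s u) :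
    ¬u =ᵐ[volume] 0 := fun h => by
  have hp := twoStar_pos N s
  rw [critInt_congr h] at hu
  simp [critInt, zero_rpow hp.ne'] at hu

lemma Equivariant.not_ae_eq {ι : Type*} {g : ι → Euc N ≃ₗᵢ[ℝ] Euc N} {χ χ' : ι → ℤˣ}
    (hu : Equivariant N s g χ u) (hv : Equivariant N s g χ' v) {i : ι} (hi : χ i ≠ χ' i)
    (hu₀ : ¬u =ᵐ[volume] 0) : ¬u =ᵐ[volume] v := fun h => by
  refine hu₀ ?_
  have h_comp := (g i).measurePreserving.quasiMeasurePreserving.ae h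
  filter_upwards [hu.symm i, hv.symm i, h, h_comp] with x hux hvx hx hgx
  rw [Int.units_ne_iff_eq_neg.1 hi] at hux
  simp only [Function.comp_apply, Pi.smul_apply, Units.neg_smul] at hux hvx
  rw [hgx, hvx, hx, self_eq_neg, smul_eq_zero_iff_eq] at hux
  exact hx.trans hux

lemma critInt_pos [Subcritical N s] (hu : Continuous u) (hsupp : HasCompactSupport u) {x : Euc N}
    (hx : u x ≠ 0) : 0 < critInt N s u := by
  have hp := twoStar_pos N s
  refine (hu.abs.rpow_const fun _ => .inr hp.le).integral_pos_of_hasCompactSupport_nonneg_nonzero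
    (hsupp.comp_left (g := fun t : ℝ => |t| ^ twoStar N s) (by simp [zero_rpow hp.ne']))
    (fun y => by positivity) (x := x) ?_
  have := abs_pos.2 hx
  positivity

/-! ### The symmetries of `ℝ^(4n+m) = (ℂ × ℂ)^n × ℝ^m` -/

variable {n m : ℕ}

/-- `(ℂ × ℂ)^n`, the coordinates being indexed by the block and the position in the block. -/
abbrev ComplexPairs (n : ℕ) := EuclideanSpace ℂ (Fin n × Fin 2)

lemma finrank_complexPairs_prod (n m : ℕ) :
    Module.finrank ℝ (WithLp 2 (ComplexPairs n × Euc m)) = 4 * n + m := by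
  rw [(WithLp.linearEquiv 2 ℝ (ComplexPairs n × Euc m)).finrank_eq, Module.finrank_prod,
    ← Module.finrank_mul_finrank ℝ ℂ (ComplexPairs n), Complex.finrank_real_complex,
    finrank_euclideanSpace, finrank_euclideanSpace_fin, Fintype.card_prod, Fintype.card_fin,
    Fintype.card_fin]
  ring

/-- An isometric splitting `ℝ^(4n+m) = (ℂ × ℂ)^n × ℝ^m`. -/
def splitting (n m : ℕ) : Euc (4 * n + m) ≃ₗᵢ[ℝ] WithLp 2 (ComplexPairs n × Euc m) :=
  ((stdOrthonormalBasis ℝ _).reindex (finCongr (finrank_complexPairs_prod n m))).repr.symm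

/-- The generators of the symmetry group on `(ℂ × ℂ)^n`: the scalar multiplications by unit complex
numbers, and the exchanges of the two coordinates of a block. -/
def pairSymm (n : ℕ) : Circle ⊕ Fin n → ComplexPairs n ≃ₗᵢ[ℝ] ComplexPairs n
  | .inl z => .piLpCongrRight 2 fun _ => rotation z
  | .inr j => .piLpCongrLeft 2 ℝ ℂ (Equiv.swap (j, 0) (j, 1))

/-- The isometries `pairSymm n i`, extended to `ℝ^(4n+m)` by the identity of `ℝ^m`. -/
def eucSymm (n m : ℕ) (i : Circle ⊕ Fin n) : Euc (4 * n + m) ≃ₗᵢ[ℝ] Euc (4 * n + m) :=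
  ((splitting n m).trans
    (.withLpProdCongr 2 (pairSymm n i) (.refl ℝ (Euc m)))).trans (splitting n m).symm

lemma pairSymm_inl (z : Circle) (y : ComplexPairs n) : pairSymm n (.inl z) y = (z : ℂ) • y := by
  ext p
  simp [pairSymm]

lemma pairSymm_inr_apply (j : Fin n) (y : ComplexPairs n) (p : Fin n × Fin 2) :
    pairSymm n (.inr j) y p = y (Equiv.swap (j, 0) (j, 1) p) := by
  simp [pairSymm]

lemma splitting_eucSymm (i : Circle ⊕ Fin n) (x : Euc (4 * n + m)) :
    splitting n m (eucSymm n m i x) =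
      WithLp.toLp 2 (pairSymm n i (splitting n m x).fst, (splitting n m x).snd) := by
  simp [eucSymm]

lemma dist_eucSymm_inl (z z' : Circle) (x : Euc (4 * n + m)) :
    dist (eucSymm n m (.inl z) x) (eucSymm n m (.inl z') x) =
      dist z z' * ‖(splitting n m x).fst‖ := by
  rw [← (splitting n m).dist_map, splitting_eucSymm, splitting_eucSymm, WithLp.prod_dist_eq_of_L2]
  simp only [pairSymm_inl, WithLp.toLp_fst, WithLp.toLp_snd, dist_self, zero_pow two_ne_zero,
    add_zero, sqrt_sq dist_nonneg]
  rw [dist_eq_norm, ← sub_smul, norm_smul, ← dist_eq_norm]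
  rfl

lemma exists_pos_pairwise_le_dist {ι X : Type*} [Finite ι] [MetricSpace X] {f : ι → X}
    (hf : Function.Injective f) : ∃ δ > 0, Pairwise fun i j => δ ≤ dist (f i) (f j) := by
  have h_small : ∀ᶠ δ in 𝓝[>] (0 : ℝ), Pairwise fun i j => δ ≤ dist (f i) (f j) := by
    simp only [Pairwise, eventually_all]
    intro i j hij
    filter_upwards [Ioc_mem_nhdsGT (dist_pos.2 (hf.ne hij))] with δ hδ using hδ.2
  obtain ⟨δ, h_le, hδ⟩ := (h_small.and self_mem_nhdsWithin).exists
  exact ⟨δ, hδ, h_le⟩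

lemma largeOrbits_eucSymm (n m : ℕ) : LargeOrbits (eucSymm n m) := fun L => by
  have : Infinite (Set.Ioc (-π) π) := (Set.Ioc_infinite (by linarith [pi_pos])).to_subtype
  have : Infinite Circle := .of_injective _ Circle.argEquiv.symm.injective
  let z : Fin L ↪ Circle := Fin.valEmbedding.trans (Infinite.natEmbedding Circle)
  obtain ⟨δ, hδ, hz⟩ := exists_pos_pairwise_le_dist z.injective
  refine ⟨2 / δ, fun x => ⟨(splitting n m).symm (WithLp.toLp 2 (0, (splitting n m x).snd)),
    fun i => (splitting n m).injective ?_, fun r _ => or_iff_not_imp_left.2 fun hr =>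
      ⟨fun k => .inl (z k), fun k l hkl => ?_⟩⟩⟩
  · simp [splitting_eucSymm]
  · have h_dist : ‖x - (splitting n m).symm (WithLp.toLp 2 (0, (splitting n m x).snd))‖ =
        ‖(splitting n m x).fst‖ := by
      rw [← (splitting n m).norm_map, map_sub, LinearIsometryEquiv.apply_symm_apply,
        WithLp.prod_norm_eq_of_L2]
      simp
    rw [h_dist, div_mul_eq_mul_div, le_div_iff₀ hδ, not_le] at hr
    calc 2 * r ≤ ‖(splitting n m x).fst‖ * δ := hr.le
      _ = δ * ‖(splitting n m x).fst‖ := mul_comm _ _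
      _ ≤ dist (z k) (z l) * ‖(splitting n m x).fst‖ := by
        gcongr
        exact hz hkl
      _ = _ := (dist_eucSymm_inl _ _ x).symm

/-! ### Sign characters and test functions -/

/-- The sign character of the symmetry group for which exactly the exchanges in the blocks of `S`
are odd. -/
def signChar (S : Finset (Fin n)) : Circle ⊕ Fin n → ℤˣ
  | .inl _ => 1
  | .inr j => if j ∈ S then -1 else 1

/-- A polynomial on `(ℂ × ℂ)^n` which transforms according to `signChar S`. -/
def pairPoly (S : Finset (Fin n)) (y : ComplexPairs n) : ℝ :=
  ∏ i ∈ S, (‖y (i, 0)‖ ^ 2 - ‖y (i, 1)‖ ^ 2)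

lemma pairPoly_pairSymm (S : Finset (Fin n)) (i : Circle ⊕ Fin n) (y : ComplexPairs n) :
    pairPoly S (pairSymm n i y) = signChar S i • pairPoly S y := by
  rcases i with z | j
  · simp [pairPoly, pairSymm_inl, signChar, Circle.norm_coe]
  · have h_factor : ∀ i, ‖pairSymm n (.inr j) y (i, 0)‖ ^ 2 - ‖pairSymm n (.inr j) y (i, 1)‖ ^ 2 =
        (if i = j then -1 else 1) * (‖y (i, 0)‖ ^ 2 - ‖y (i, 1)‖ ^ 2) := fun i => by
      by_cases hij : i = j
      · simp [pairSymm_inr_apply, hij]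
      · simp [pairSymm_inr_apply, hij, Equiv.swap_apply_of_ne_of_ne]
    simp only [pairPoly, h_factor, Finset.prod_mul_distrib, Finset.prod_ite_eq', signChar]
    split_ifs <;> simp

lemma contDiff_pairPoly (S : Finset (Fin n)) : ContDiff ℝ 1 (pairPoly S) :=
  contDiff_prod fun i _ => by
    have h_coord : ∀ p, ContDiff ℝ 1 fun y : ComplexPairs n => y p :=
      fun _ => contDiff_piLp_apply 2
    exact ((h_coord _).norm_sq ℝ).sub ((h_coord _).norm_sq ℝ)

/-- The polynomial `pairPoly S`, cut off outside a ball. -/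
def seed (n m : ℕ) (S : Finset (Fin n)) (x : Euc (4 * n + m)) : ℝ :=
  pairPoly S (splitting n m x).fst * smoothTransition (n + 1 - ‖x‖ ^ 2)

lemma contDiff_seed (S : Finset (Fin n)) : ContDiff ℝ 1 (seed n m S) := by
  have h_fst : ContDiff ℝ 1 fun x => (splitting n m x).fst :=
    (WithLp.fstL 2 ℝ (ComplexPairs n) (Euc m)).contDiff.comp (splitting n m).contDiff
  exact ((contDiff_pairPoly S).comp h_fst).mul
    (smoothTransition.contDiff.comp (contDiff_const.sub (contDiff_id.norm_sq ℝ)))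

lemma hasCompactSupport_seed (S : Finset (Fin n)) : HasCompactSupport (seed n m S) := by
  refine .intro (isCompact_closedBall 0 ((n : ℝ) + 1)) fun x hx => ?_
  rw [mem_closedBall_zero_iff, not_le] at hx
  have : (n : ℝ) + 1 - ‖x‖ ^ 2 ≤ 0 := by nlinarith
  rw [seed, smoothTransition.zero_of_nonpos this, mul_zero]

lemma exists_seed_ne_zero (S : Finset (Fin n)) : ∃ x, seed n m S x ≠ 0 := by
  set y : ComplexPairs n := WithLp.toLp 2 fun p => if p.2 = 0 then 1 else 0 with hy
  refine ⟨(splitting n m).symm (WithLp.toLp 2 (y, 0)), mul_ne_zero ?_ ?_⟩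
  · simp [pairPoly, hy]
  · have h_norm : ‖(splitting n m).symm (WithLp.toLp 2 (y, 0))‖ ^ 2 = n := by
      rw [LinearIsometryEquiv.norm_map, WithLp.prod_norm_sq_eq_of_L2, EuclideanSpace.norm_sq_eq]
      simp [hy, Fintype.sum_prod_type]
    rw [h_norm, add_sub_cancel_left]
    exact (smoothTransition.pos_of_pos one_pos).ne'

lemma equivariant_seed [Subcritical (4 * n + m) s] (hs : s < 1) (S : Finset (Fin n)) :
    Equivariant (4 * n + m) s (eucSymm n m) (signChar S) (seed n m S) where
  hs := hs_of_contDiff hs (contDiff_seed S) (hasCompactSupport_seed S)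
  symm i := ae_of_all _ fun x => by
    simp [seed, splitting_eucSymm, pairPoly_pairSymm, smul_mul_assoc]

lemma exists_solution [Subcritical (4 * n + m) s] (hs : s < 1) (S : Finset (Fin n)) :
    ∃ w, Equivariant (4 * n + m) s (eucSymm n m) (signChar S) w ∧ ¬w =ᵐ[volume] 0 ∧
      ∀ v, Hs (4 * n + m) s v → pairing (4 * n + m) s Set.univ w v = 0 := by
  obtain ⟨x, hx⟩ := exists_seed_ne_zero (m := m) S
  obtain ⟨w, hw, hw_pos, h_sol⟩ := exists_equivariant_solution (largeOrbits_eucSymm n m)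
    ⟨_, equivariant_seed hs S,
      critInt_pos (contDiff_seed S).continuous (hasCompactSupport_seed S) hx⟩
  exact ⟨w, hw, not_ae_eq_zero_of_critInt_pos hw_pos, h_sol⟩

lemma signChar_injective : Function.Injective (signChar (n := n)) := fun S S' h => by
  ext j
  have hj := congrFun h (.inr j)
  by_cases hS : j ∈ S <;> by_cases hS' : j ∈ S' <;> simp_all [signChar]

end FracSobolev

/-- for `N = 4n + m`, `n ≥ 1`, `m ∈ {0,1,2,3}` and `0 < s < 1`, the fractional
critical Schrödinger equation has at least `n` pairwise distinct, sign-changing, non-radial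
weak solutions in `Ḣ^s(ℝ^N)`. -/
theorem statement0 (n m N : ℕ) (hn : 1 ≤ n) (hm : m ≤ 3) (hNnm : N = 4 * n + m)
    (s : ℝ) (hs0 : 0 < s) (hs1 : s < 1) :
    ∃ u : Fin n → Euc N → ℝ,
      (∀ i j : Fin n, i ≠ j → ¬ (∀ᵐ x : Euc N, u i x = u j x)) ∧
      ∀ i : Fin n,
        MemHs N s Set.univ (u i) ∧
        (∀ v : Euc N → ℝ, MemHs N s Set.univ v → pairing N s Set.univ (u i) v = 0) ∧
        0 < volume {x : Euc N | 0 < u i x} ∧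
        0 < volume {x : Euc N | u i x < 0} ∧
        ¬ ∃ f : ℝ → ℝ, ∀ᵐ x : Euc N, u i x = f ‖x‖ := by
  subst hNnm
  have hn' : (1 : ℝ) ≤ n := by exact_mod_cast hn
  have : FracSobolev.Subcritical (4 * n + m) s :=
    ⟨hs0, by push_cast; linarith [m.cast_nonneg (α := ℝ)]⟩
  choose u hu hu₀ h_sol using fun S : Finset (Fin n) => FracSobolev.exists_solution (m := m) hs1 S
  have h_odd (j : Fin n) :
      u (Finset.Iic j) ∘ FracSobolev.eucSymm n m (.inr j) =ᵐ[volume] -u (Finset.Iic j) := by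
    simpa [FracSobolev.signChar] using (hu (Finset.Iic j)).symm (.inr j)
  refine ⟨fun j => u (Finset.Iic j), fun i j hij => ?_, fun j => ⟨(hu _).hs, h_sol _, ?_, ?_, ?_⟩⟩
  · have h_ne : Finset.Iic i ≠ Finset.Iic j := fun h =>
      hij (Set.Iic_injective (by rw [← Finset.coe_Iic, h, Finset.coe_Iic]))
    obtain ⟨k, hk⟩ := Function.ne_iff.1 (FracSobolev.signChar_injective.ne h_ne)
    exact (hu _).not_ae_eq (hu _) hk (hu₀ _)
  · exact FracSobolev.volume_pos_set_of_comp_eq_neg (h_odd j) (hu₀ _)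
  · exact FracSobolev.volume_neg_set_of_comp_eq_neg (h_odd j) (hu₀ _)
  · exact FracSobolev.not_radial_of_comp_eq_neg (h_odd j) (hu₀ _)

end
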